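/- arXiv:1506.01655 — 2 statements merged into one kernel-verified Lean document; each statement's English description precedes it below -/
import Mathlib

section
/- (Polynomial decay, first-order case) There exists a constant C > 0, depending only on L, η, β, κ, τ, m, δ and p, such that for every smooth solution (u, θ, q) of the thermoviscoelastic system with second sound satisfying boundary conditions (D) and every t > 0, E₁(t) ≤ C (E₁(0) + E₂(0)) / t. -/
open MeasureTheory Set intervalIntegral

noncomputable section

/-- Time derivative of a function of `(x, t)` (curried as `x ↦ t ↦ f x t`). -/
def pdt (f : ℝ → ℝ → ℝ) : ℝ → ℝ → ℝ := fun x t => deriv (f x) t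

/-- Space derivative of a function of `(x, t)`. -/
def pdx (f : ℝ → ℝ → ℝ) : ℝ → ℝ → ℝ := fun x t => deriv (fun y => f y t) x

/-- A smooth solution of the thermoviscoelastic system with second sound:
`u, θ, q` are `C^∞` and the three PDEs hold on `(0, L) × (0, ∞)`. -/
def IsSmoothSol (L η β κ τ : ℝ) (m δ p : ℝ → ℝ) (u θ q : ℝ → ℝ → ℝ) : Prop :=
  ContDiff ℝ (⊤ : ℕ∞) (Function.uncurry u) ∧ ContDiff ℝ (⊤ : ℕ∞) (Function.uncurry θ) ∧
    ContDiff ℝ (⊤ : ℕ∞) (Function.uncurry q) ∧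
    ∀ x ∈ Ioo (0 : ℝ) L, ∀ t : ℝ, 0 < t →
      (m x * pdt (pdt u) x t
          - pdx (fun y s => p y * pdx u y s + 2 * δ y * pdt (pdx u) y s) x t
          + η * pdx θ x t = 0) ∧
      (pdt θ x t + κ * pdx q x t + η * pdt (pdx u) x t = 0) ∧
      (τ * pdt q x t + β * q x t + κ * pdx θ x t = 0)

/-- Boundary conditions (D): clamped structure, temperature zero at both ends. -/
def BCD (L : ℝ) (u θ : ℝ → ℝ → ℝ) : Prop :=
  ∀ t : ℝ, 0 ≤ t → u 0 t = 0 ∧ u L t = 0 ∧ θ 0 t = 0 ∧ θ L t = 0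

/-- The first-order energy `E₁`. -/
def energy1 (L τ : ℝ) (m p : ℝ → ℝ) (u θ q : ℝ → ℝ → ℝ) (t : ℝ) : ℝ :=
  (1 / 2) * ((∫ x in (0 : ℝ)..L, p x * (pdx u x t) ^ 2)
    + (∫ x in (0 : ℝ)..L, m x * (pdt u x t) ^ 2)
    + (∫ x in (0 : ℝ)..L, (θ x t) ^ 2)
    + τ * ∫ x in (0 : ℝ)..L, (q x t) ^ 2)

/-- The second-order energy `E₂`. -/
def energy2 (L τ : ℝ) (m p : ℝ → ℝ) (u θ q : ℝ → ℝ → ℝ) (t : ℝ) : ℝ :=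
  (1 / 2) * ((∫ x in (0 : ℝ)..L, p x * (pdt (pdx u) x t) ^ 2)
    + (∫ x in (0 : ℝ)..L, m x * (pdt (pdt u) x t) ^ 2)
    + (∫ x in (0 : ℝ)..L, (pdt θ x t) ^ 2)
    + τ * ∫ x in (0 : ℝ)..L, (pdt q x t) ^ 2)

open Filter
open scoped ContDiff

/-!
Along a solution `E₁' = -D`, where the dissipation `D = 2 ∫ δ u_xt² + β ∫ q²` controls neither the
displacement nor the temperature. The time derivative of a solution solves the system again, hence
`E₂' = -D'` with `D'` its dissipation; as `∂_t` need not commute with the space derivative of the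
flux `p u_x + 2 δ u_xt`, this is done with the balance of momentum in weak form. Now `D` and `D'`
together control `E₁`: Cattaneo's law bounds `θ_x` by `q_t` and `q`, the Poincaré inequality bounds
`θ`, `u_t` and `u_tt`, and testing the balance of momentum with `u` bounds `u_x`. From
`E₁ ≤ K (D + D')` it follows that `t E₁ + K (E₁ + E₂)` is nonincreasing in `t`.
-/

/-- Joint `C^∞` regularity of a function of `(x, t)`, curried as in `pdt` and `pdx`. -/
def JointlySmooth (f : ℝ → ℝ → ℝ) : Prop := ContDiff ℝ ∞ (Function.uncurry f)

namespace JointlySmooth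

variable {f : ℝ → ℝ → ℝ}

lemma contDiff_slice (hf : JointlySmooth f) (t : ℝ) : ContDiff ℝ ∞ (fun x => f x t) :=
  ContDiff.comp hf (contDiff_prodMk_left t)

lemma continuous_slice (hf : JointlySmooth f) (t : ℝ) : Continuous (fun x => f x t) :=
  (hf.contDiff_slice t).continuous

lemma hasDerivAt_time (hf : JointlySmooth f) (x t : ℝ) : HasDerivAt (f x) (pdt f x t) t :=
  ((ContDiff.comp hf (contDiff_prodMk_right x)).differentiable (by simp) t).hasDerivAt

lemma hasDerivAt_space (hf : JointlySmooth f) (x t : ℝ) :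
    HasDerivAt (fun y => f y t) (pdx f x t) x :=
  ((hf.contDiff_slice t).differentiable (by simp) x).hasDerivAt

lemma uncurry_pdt (hf : JointlySmooth f) :
    Function.uncurry (pdt f) = fun z => fderiv ℝ (Function.uncurry f) z (0, 1) := by
  ext ⟨x, t⟩
  have path : HasDerivAt (fun s : ℝ => (x, s)) (0, 1) t :=
    (hasDerivAt_const t x).prodMk (hasDerivAt_id t)
  have total := (ContDiff.differentiable hf (by simp) (x, t)).hasFDerivAt
  exact (total.comp_hasDerivAt t path).deriv

lemma uncurry_pdx (hf : JointlySmooth f) :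
    Function.uncurry (pdx f) = fun z => fderiv ℝ (Function.uncurry f) z (1, 0) := by
  ext ⟨x, t⟩
  have path : HasDerivAt (fun y : ℝ => (y, t)) (1, 0) x :=
    (hasDerivAt_id x).prodMk (hasDerivAt_const x t)
  have total := (ContDiff.differentiable hf (by simp) (x, t)).hasFDerivAt
  exact (total.comp_hasDerivAt x path).deriv

lemma contDiff_fderiv (hf : JointlySmooth f) :
    ContDiff ℝ ∞ (fderiv ℝ (Function.uncurry f)) :=
  ContDiff.fderiv_right hf (by simp)

protected lemma pdt (hf : JointlySmooth f) : JointlySmooth (pdt f) := by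
  rw [JointlySmooth, hf.uncurry_pdt]
  exact hf.contDiff_fderiv.clm_apply contDiff_const

protected lemma pdx (hf : JointlySmooth f) : JointlySmooth (pdx f) := by
  rw [JointlySmooth, hf.uncurry_pdx]
  exact hf.contDiff_fderiv.clm_apply contDiff_const

lemma pdx_pdt (hf : JointlySmooth f) : pdx (pdt f) = pdt (pdx f) := by
  ext x t
  have hd : DifferentiableAt ℝ (fderiv ℝ (Function.uncurry f)) (x, t) :=
    hf.contDiff_fderiv.differentiable (by simp) _
  have symm : IsSymmSndFDerivAt ℝ (Function.uncurry f) (x, t) :=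
    (ContDiff.contDiffAt hf).isSymmSndFDerivAt (by
      rw [minSmoothness_of_isRCLikeNormedField]; exact WithTop.coe_le_coe.2 le_top)
  change Function.uncurry (pdx (pdt f)) (x, t) = Function.uncurry (pdt (pdx f)) (x, t)
  rw [hf.pdt.uncurry_pdx, hf.pdx.uncurry_pdt, hf.uncurry_pdt, hf.uncurry_pdx]
  simpa [fderiv_clm_apply hd (differentiableAt_const _)] using symm (1, 0) (0, 1)

lemma sq (hf : JointlySmooth f) : JointlySmooth (fun x t => f x t ^ 2) :=
  ContDiff.pow hf 2

lemma pdt_sq (hf : JointlySmooth f) :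
    pdt (fun x t => f x t ^ 2) = fun x t => 2 * (f x t * pdt f x t) := by
  ext x t
  have h : HasDerivAt (fun s => f x s ^ 2) (2 * (f x t * pdt f x t)) t :=
    ((hf.hasDerivAt_time x t).fun_pow 2).congr_deriv (by simp [mul_assoc])
  exact h.deriv

end JointlySmooth

lemma eq_zero_of_hasDerivAt_of_forall_pos {g : ℝ → ℝ} {g' t : ℝ} (hg : HasDerivAt g g' t)
    (ht : 0 < t) (hz : ∀ s, 0 < s → g s = 0) : g' = 0 := by
  refine hg.unique ((hasDerivAt_const t (0 : ℝ)).congr_of_eventuallyEq ?_)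
  filter_upwards [Ioi_mem_nhds ht] with s hs using hz s hs

section IntervalIntegrals

variable {a b : ℝ}

lemma hasDerivAt_integral_of_continuousOn {E : Type*} [NormedAddCommGroup E] [NormedSpace ℝ E]
    {G G' : ℝ → ℝ → E} (hG : ∀ t, ContinuousOn (fun x => G x t) (uIcc a b))
    (hG' : ContinuousOn (Function.uncurry G') (uIcc a b ×ˢ univ))
    (hd : ∀ x ∈ uIcc a b, ∀ t, HasDerivAt (G x) (G' x t) t) (t : ℝ) :
    HasDerivAt (fun s => ∫ x in a..b, G x s) (∫ x in a..b, G' x t) t := by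
  obtain ⟨M, hM⟩ := (isCompact_uIcc.prod isCompact_Icc).exists_bound_of_continuousOn
    (hG'.mono (prod_mono_right (subset_univ (Icc (t - 1) (t + 1)))))
  have hint : ∀ s, IntervalIntegrable (fun x => G x s) volume a b := fun s =>
    (hG s).intervalIntegrable
  have hint' : IntervalIntegrable (fun x => G' x t) volume a b :=
    (hG'.comp (f := fun x => (x, t)) (by fun_prop)
      fun x hx => ⟨hx, mem_univ _⟩).intervalIntegrable
  exact (intervalIntegral.hasDerivAt_integral_of_dominated_loc_of_deriv_le
    (F := fun s x => G x s) (F' := fun s x => G' x s) (bound := fun _ => M)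
    (Icc_mem_nhds (sub_one_lt t) (lt_add_one t))
    (Eventually.of_forall fun s => (intervalIntegrable_iff.1 (hint s)).aestronglyMeasurable)
    (hint t)
    (intervalIntegrable_iff.1 hint').aestronglyMeasurable
    (ae_of_all _ fun x hx s hs => hM (x, s) ⟨uIoc_subset_uIcc hx, hs⟩)
    intervalIntegrable_const
    (ae_of_all _ fun x hx s _ => hd x (uIoc_subset_uIcc hx) s)).2

lemma hasDerivAt_integral_mul {w : ℝ → ℝ} {f : ℝ → ℝ → ℝ} (hw : ContinuousOn w (uIcc a b))
    (hf : JointlySmooth f) (t : ℝ) :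
    HasDerivAt (fun s => ∫ x in a..b, w x * f x s) (∫ x in a..b, w x * pdt f x t) t := by
  refine hasDerivAt_integral_of_continuousOn (G' := fun x s => w x * pdt f x s)
    (fun t => hw.mul (hf.continuous_slice t).continuousOn) ?_
    (fun x _ t => (hf.hasDerivAt_time x t).const_mul (w x)) t
  exact (hw.comp continuousOn_fst fun z hz => hz.1).mul (ContDiff.continuous hf.pdt).continuousOn

lemma hasDerivAt_integral_mul_sq {w : ℝ → ℝ} {f : ℝ → ℝ → ℝ} (hw : ContinuousOn w (uIcc a b))
    (hf : JointlySmooth f) (t : ℝ) :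
    HasDerivAt (fun s => ∫ x in a..b, w x * f x s ^ 2)
      (2 * ∫ x in a..b, w x * (f x t * pdt f x t)) t := by
  refine (hasDerivAt_integral_mul hw hf.sq t).congr_deriv ?_
  rw [hf.pdt_sq, ← intervalIntegral.integral_const_mul]
  exact integral_congr fun x _ => mul_left_comm _ _ _

lemma integral_sq_nonneg (hab : a ≤ b) (f : ℝ → ℝ) : 0 ≤ ∫ x in a..b, f x ^ 2 :=
  intervalIntegral.integral_nonneg hab fun _ _ => sq_nonneg _

lemma integral_mul_sq_nonneg (hab : a ≤ b) {w : ℝ → ℝ} (hw : ∀ x ∈ Icc a b, 0 ≤ w x)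
    (f : ℝ → ℝ) : 0 ≤ ∫ x in a..b, w x * f x ^ 2 :=
  intervalIntegral.integral_nonneg hab fun x hx => mul_nonneg (hw x hx) (sq_nonneg _)

lemma integral_mul_sq_mono (hab : a ≤ b) {v w f : ℝ → ℝ} (hv : ContinuousOn v (Icc a b))
    (hw : ContinuousOn w (Icc a b)) (hf : ContinuousOn f (Icc a b))
    (hvw : ∀ x ∈ Icc a b, v x ≤ w x) :
    ∫ x in a..b, v x * f x ^ 2 ≤ ∫ x in a..b, w x * f x ^ 2 :=
  integral_mono_on hab ((hv.mul (hf.pow 2)).intervalIntegrable_of_Icc hab)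
    ((hw.mul (hf.pow 2)).intervalIntegrable_of_Icc hab)
    fun x hx => mul_le_mul_of_nonneg_right (hvw x hx) (sq_nonneg _)

lemma mul_integral_sq_le_integral_mul_sq (hab : a ≤ b) {w f : ℝ → ℝ} {c : ℝ}
    (hw : ContinuousOn w (Icc a b)) (hf : ContinuousOn f (Icc a b))
    (hc : ∀ x ∈ Icc a b, c ≤ w x) :
    c * ∫ x in a..b, f x ^ 2 ≤ ∫ x in a..b, w x * f x ^ 2 := by
  rw [← intervalIntegral.integral_const_mul]
  exact integral_mul_sq_mono hab continuousOn_const hw hf hc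

lemma integral_mul_sq_le_mul_integral_sq (hab : a ≤ b) {w f : ℝ → ℝ} {c : ℝ}
    (hw : ContinuousOn w (Icc a b)) (hf : ContinuousOn f (Icc a b))
    (hc : ∀ x ∈ Icc a b, w x ≤ c) :
    ∫ x in a..b, w x * f x ^ 2 ≤ c * ∫ x in a..b, f x ^ 2 := by
  rw [← intervalIntegral.integral_const_mul]
  exact integral_mul_sq_mono hab hw continuousOn_const hf hc

lemma integral_mul_pow_two_le_sq_mul_integral_sq (hab : a ≤ b) {w f : ℝ → ℝ} {c : ℝ}
    (hw : ContinuousOn w (Icc a b)) (hf : ContinuousOn f (Icc a b))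
    (hc : ∀ x ∈ Icc a b, |w x| ≤ c) :
    ∫ x in a..b, (w x * f x) ^ 2 ≤ c ^ 2 * ∫ x in a..b, f x ^ 2 := by
  simp only [mul_pow]
  exact integral_mul_sq_le_mul_integral_sq hab (hw.pow 2) hf
    fun x hx => sq_le_sq' (neg_le_of_abs_le (hc x hx)) (le_of_abs_le (hc x hx))

lemma integral_add_sq_le (hab : a ≤ b) {f g : ℝ → ℝ} (hf : ContinuousOn f (Icc a b))
    (hg : ContinuousOn g (Icc a b)) :
    ∫ x in a..b, (f x + g x) ^ 2
      ≤ 2 * ((∫ x in a..b, f x ^ 2) + ∫ x in a..b, g x ^ 2) := by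
  have hf2 : IntervalIntegrable (fun x => f x ^ 2) volume a b :=
    (hf.pow 2).intervalIntegrable_of_Icc hab
  have hg2 : IntervalIntegrable (fun x => g x ^ 2) volume a b :=
    (hg.pow 2).intervalIntegrable_of_Icc hab
  rw [← intervalIntegral.integral_add hf2 hg2, ← intervalIntegral.integral_const_mul]
  exact integral_mono_on hab (((hf.add hg).pow 2).intervalIntegrable_of_Icc hab)
    ((hf2.add hg2).const_mul 2) fun x _ => add_sq_le

/-- Hardy-type trick: integrate the derivative of `(x - b) φ²`, which vanishes at both ends. -/
lemma poincare_inequality (hab : a ≤ b) {φ φ' : ℝ → ℝ}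
    (hφ : ∀ x ∈ Icc a b, HasDerivAt φ (φ' x) x) (hφ' : ContinuousOn φ' (Icc a b))
    (ha : φ a = 0) :
    ∫ x in a..b, φ x ^ 2 ≤ 4 * (b - a) ^ 2 * ∫ x in a..b, φ' x ^ 2 := by
  have hφc : ContinuousOn φ (Icc a b) := fun x hx => (hφ x hx).continuousAt.continuousWithinAt
  have integrable {F : ℝ → ℝ} (hF : ContinuousOn F (Icc a b)) : IntervalIntegrable F volume a b :=
    hF.intervalIntegrable_of_Icc hab
  have boundary : ∫ x in a..b, (φ x ^ 2 + (x - b) * (2 * φ x * φ' x)) = 0 := by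
    rw [integral_eq_sub_of_hasDerivAt (f := fun x => (x - b) * φ x ^ 2)]
    · simp [ha]
    · intro x hx
      rw [uIcc_of_le hab] at hx
      exact (((hasDerivAt_id x).sub_const b).mul ((hφ x hx).pow 2)).congr_deriv (by simp)
    · exact integrable (by fun_prop)
  have young : ∫ x in a..b, ((1 / 2) * φ x ^ 2 - 2 * (b - a) ^ 2 * φ' x ^ 2)
      ≤ ∫ x in a..b, (φ x ^ 2 + (x - b) * (2 * φ x * φ' x)) := by
    refine integral_mono_on hab (integrable (by fun_prop)) (integrable (by fun_prop)) fun x hx => ?_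
    have hsq : (b - x) ^ 2 ≤ (b - a) ^ 2 :=
      pow_le_pow_left₀ (sub_nonneg.2 hx.2) (sub_le_sub_left hx.1 b) 2
    nlinarith [sq_nonneg (φ x - 2 * (b - x) * φ' x),
      mul_le_mul_of_nonneg_right hsq (sq_nonneg (φ' x))]
  rw [boundary, intervalIntegral.integral_sub (integrable (by fun_prop))
    (integrable (by fun_prop)), intervalIntegral.integral_const_mul,
    intervalIntegral.integral_const_mul] at young
  linarith

/-- A priori estimate for the weak form of `(p w')' = f - g'`, tested with `w` itself. -/
lemma integral_mul_deriv_sq_le_of_weak_form (hab : a < b) {w w' p f g : ℝ → ℝ} {P : ℝ}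
    (hP : 0 < P) (hPp : ∀ x ∈ Icc a b, P ≤ p x) (hp : ContinuousOn p (Icc a b))
    (hf : ContinuousOn f (Icc a b)) (hg : ContinuousOn g (Icc a b))
    (hw : ∀ x ∈ Icc a b, HasDerivAt w (w' x) x) (hw' : ContinuousOn w' (Icc a b))
    (ha : w a = 0)
    (hweak : ∫ x in a..b, p x * w' x ^ 2 = -∫ x in a..b, (f x * w x + g x * w' x)) :
    ∫ x in a..b, p x * w' x ^ 2
      ≤ 2 / P * (4 * (b - a) ^ 2 * (∫ x in a..b, f x ^ 2) + ∫ x in a..b, g x ^ 2) := by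
  have hwc : ContinuousOn w (Icc a b) := fun x hx => (hw x hx).continuousAt.continuousWithinAt
  have integrable {F : ℝ → ℝ} (hF : ContinuousOn F (Icc a b)) : IntervalIntegrable F volume a b :=
    hF.intervalIntegrable_of_Icc hab.le
  have hℓ : 0 < b - a := sub_pos.2 hab
  set ε := P / (8 * (b - a) ^ 2) with hε
  have hε0 : 0 < ε := by positivity
  have coercive := mul_integral_sq_le_integral_mul_sq hab.le hp hw' hPp
  have absorb : ε * ∫ x in a..b, w x ^ 2 ≤ P / 2 * ∫ x in a..b, w' x ^ 2 :=
    calc ε * ∫ x in a..b, w x ^ 2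
        ≤ ε * (4 * (b - a) ^ 2 * ∫ x in a..b, w' x ^ 2) := by
          gcongr; exact poincare_inequality hab.le hw hw' ha
      _ = P / 2 * ∫ x in a..b, w' x ^ 2 := by rw [hε]; field_simp; ring
  have young : ∫ x in a..b, -(f x * w x + g x * w' x)
      ≤ ∫ x in a..b, (ε / 2 * w x ^ 2 + ε⁻¹ / 2 * f x ^ 2 + P / 4 * w' x ^ 2
          + P⁻¹ * g x ^ 2) := by
    refine integral_mono_on hab.le (integrable (by fun_prop)) (integrable (by fun_prop))
      fun x _ => ?_
    have hfw := two_mul_le_add_mul_sq (a := w x) (b := -f x) hε0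
    have hgw := two_mul_le_add_mul_sq (a := w' x) (b := -g x) (half_pos hP)
    rw [inv_div] at hgw
    linear_combination (hfw + hgw) / 2
  rw [intervalIntegral.integral_neg, ← hweak, intervalIntegral.integral_add,
    intervalIntegral.integral_add, intervalIntegral.integral_add] at young
  · simp only [intervalIntegral.integral_const_mul] at young
    have hinv : ε⁻¹ = 8 * (b - a) ^ 2 / P := inv_div _ _
    rw [hinv] at young
    linear_combination 2 * young + absorb + coercive
  all_goals exact integrable (by fun_prop)

end IntervalIntegrals

/-- Left-hand side of the balance of momentum in weak form, tested with `φ`. Space derivatives of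
the flux `p u_x + 2 δ u_xt` have been moved onto `φ`, so that no derivative of the coefficients
appears. -/
def weakMomentum (L η : ℝ) (m δ p : ℝ → ℝ) (u θ : ℝ → ℝ → ℝ) (φ : ℝ → ℝ) (t : ℝ) : ℝ :=
  (∫ x in (0 : ℝ)..L, m x * φ x * pdt (pdt u) x t)
    + (∫ x in (0 : ℝ)..L, p x * deriv φ x * pdx u x t)
    + 2 * (∫ x in (0 : ℝ)..L, δ x * deriv φ x * pdx (pdt u) x t)
    + η * ∫ x in (0 : ℝ)..L, φ x * pdx θ x t

/-- Solutions of the system with boundary conditions (D) whose balance of momentum is imposed only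
in weak form. Unlike `IsSmoothSol`, this notion is stable under time differentiation when the
coefficients are not differentiable. -/
structure IsWeakSol (L η β κ τ : ℝ) (m δ p : ℝ → ℝ) (u θ q : ℝ → ℝ → ℝ) : Prop where
  smooth_u : JointlySmooth u
  smooth_θ : JointlySmooth θ
  smooth_q : JointlySmooth q
  boundary : ∀ t, 0 < t → u 0 t = 0 ∧ u L t = 0 ∧ θ 0 t = 0 ∧ θ L t = 0
  momentum : ∀ t, 0 < t → ∀ φ : ℝ → ℝ, ContDiff ℝ 1 φ → φ 0 = 0 → φ L = 0 →
    weakMomentum L η m δ p u θ φ t = 0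
  heat : ∀ x ∈ Ioo 0 L, ∀ t, 0 < t → pdt θ x t + κ * pdx q x t + η * pdx (pdt u) x t = 0
  cattaneo : ∀ x ∈ Ioo 0 L, ∀ t, 0 < t → τ * pdt q x t + β * q x t + κ * pdx θ x t = 0

/-- The rate at which viscosity and heat conduction dissipate the energy `energy1`. -/
def dissipation (L β : ℝ) (δ : ℝ → ℝ) (u q : ℝ → ℝ → ℝ) (t : ℝ) : ℝ :=
  2 * (∫ x in (0 : ℝ)..L, δ x * pdx (pdt u) x t ^ 2) + β * ∫ x in (0 : ℝ)..L, q x t ^ 2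

section System

variable {L η β κ τ : ℝ} {m δ p : ℝ → ℝ} {u θ q : ℝ → ℝ → ℝ}

lemma hasDerivAt_weakMomentum (hm : ContinuousOn m (uIcc 0 L)) (hδ : ContinuousOn δ (uIcc 0 L))
    (hp : ContinuousOn p (uIcc 0 L)) (hu : JointlySmooth u) (hθ : JointlySmooth θ) {φ : ℝ → ℝ}
    (hφ : ContDiff ℝ 1 φ) (t : ℝ) :
    HasDerivAt (weakMomentum L η m δ p u θ φ) (weakMomentum L η m δ p (pdt u) (pdt θ) φ t) t := by
  have hφc : ContinuousOn φ (uIcc 0 L) := hφ.continuous.continuousOn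
  have hφ'c : ContinuousOn (deriv φ) (uIcc 0 L) := (hφ.continuous_deriv le_rfl).continuousOn
  have inertia := hasDerivAt_integral_mul (hm.mul hφc) hu.pdt.pdt t
  have elastic := hasDerivAt_integral_mul (hp.mul hφ'c) hu.pdx t
  have viscous := hasDerivAt_integral_mul (hδ.mul hφ'c) hu.pdt.pdx t
  have thermal := hasDerivAt_integral_mul hφc hθ.pdx t
  rw [← hu.pdx_pdt] at elastic
  rw [← hu.pdt.pdx_pdt] at viscous
  rw [← hθ.pdx_pdt] at thermal
  exact ((inertia.add elastic).add (viscous.const_mul 2)).add (thermal.const_mul η)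

lemma weakMomentum_eq_integral (hm : ContinuousOn m (uIcc 0 L)) (hδ : ContinuousOn δ (uIcc 0 L))
    (hp : ContinuousOn p (uIcc 0 L)) (hu : JointlySmooth u) (hθ : JointlySmooth θ) {φ : ℝ → ℝ}
    (hφ : ContDiff ℝ 1 φ) (t : ℝ) :
    weakMomentum L η m δ p u θ φ t
      = ∫ x in (0 : ℝ)..L, (m x * φ x * pdt (pdt u) x t + p x * deriv φ x * pdx u x t
          + 2 * (δ x * deriv φ x * pdx (pdt u) x t) + η * (φ x * pdx θ x t)) := by
  have hφc := hφ.continuous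
  have acceleration := hu.pdt.pdt.continuous_slice t
  have strain := hu.pdx.continuous_slice t
  have strain_rate := hu.pdt.pdx.continuous_slice t
  have gradient := hθ.pdx.continuous_slice t
  rw [intervalIntegral.integral_add, intervalIntegral.integral_add,
    intervalIntegral.integral_add]
  · simp only [weakMomentum, intervalIntegral.integral_const_mul]
  all_goals exact ContinuousOn.intervalIntegrable (by fun_prop)

lemma weakMomentum_eq_zero_of_isSmoothSol (hL : 0 ≤ L) (hm : ContinuousOn m (Icc 0 L))
    (hδ : AbsolutelyContinuousOnInterval δ 0 L) (hp : AbsolutelyContinuousOnInterval p 0 L)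
    (h : IsSmoothSol L η β κ τ m δ p u θ q) {t : ℝ} (ht : 0 < t) {φ : ℝ → ℝ}
    (hφ : ContDiff ℝ 1 φ) (hφ0 : φ 0 = 0) (hφL : φ L = 0) :
    weakMomentum L η m δ p u θ φ t = 0 := by
  obtain ⟨hu, hθ, -, hpde⟩ := h
  replace hu : JointlySmooth u := hu
  replace hθ : JointlySmooth θ := hθ
  have slice_ac {f : ℝ → ℝ → ℝ} (hf : JointlySmooth f) :
      AbsolutelyContinuousOnInterval (fun x => f x t) 0 L :=
    ((hf.contDiff_slice t).of_le (by simp)).contDiffOn.absolutelyContinuousOnInterval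
  set σ : ℝ → ℝ := fun y => p y * pdx u y t + 2 * δ y * pdx (pdt u) y t with hσ
  have σ_ac : AbsolutelyContinuousOnInterval σ 0 L :=
    (hp.fun_mul (slice_ac hu.pdx)).fun_add ((hδ.const_mul 2).fun_mul (slice_ac hu.pdt.pdx))
  have by_parts : ∫ x in (0 : ℝ)..L, (deriv φ x * σ x + φ x * deriv σ x) = 0 := by
    rw [hφ.contDiffOn.absolutelyContinuousOnInterval.integral_deriv_mul_eq_sub σ_ac, hφ0, hφL]
    simp
  rw [weakMomentum_eq_integral (uIcc_of_le hL ▸ hm) hδ.continuousOn hp.continuousOn hu hθ hφ]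
  refine Eq.trans ?_ by_parts
  apply integral_congr_Ioo_of_le hL
  intro x hx
  have hmom := (hpde x hx t ht).1
  rw [← hu.pdx_pdt] at hmom
  change m x * pdt (pdt u) x t - deriv σ x + η * pdx θ x t = 0 at hmom
  simp only [hσ] at hmom ⊢
  linear_combination φ x * hmom

lemma isWeakSol_of_isSmoothSol (hL : 0 ≤ L) (hm : ContinuousOn m (Icc 0 L))
    (hδ : AbsolutelyContinuousOnInterval δ 0 L) (hp : AbsolutelyContinuousOnInterval p 0 L)
    (h : IsSmoothSol L η β κ τ m δ p u θ q) (hb : BCD L u θ) :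
    IsWeakSol L η β κ τ m δ p u θ q where
  smooth_u := h.1
  smooth_θ := h.2.1
  smooth_q := h.2.2.1
  boundary t ht := hb t ht.le
  momentum _ ht _ hφ hφ0 hφL :=
    weakMomentum_eq_zero_of_isSmoothSol hL hm hδ hp h ht hφ hφ0 hφL
  heat x hx t ht := by
    rw [JointlySmooth.pdx_pdt h.1]
    exact (h.2.2.2 x hx t ht).2.1
  cattaneo x hx t ht := (h.2.2.2 x hx t ht).2.2

lemma energy2_eq_energy1_pdt (hu : JointlySmooth u) :
    energy2 L τ m p u θ q = energy1 L τ m p (pdt u) (pdt θ) (pdt q) := by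
  funext t
  simp only [energy1, energy2, hu.pdx_pdt]

lemma energy1_nonneg (hL : 0 ≤ L) (hτ : 0 ≤ τ) (hm : ∀ x ∈ Icc 0 L, 0 ≤ m x)
    (hp : ∀ x ∈ Icc 0 L, 0 ≤ p x) (u θ q : ℝ → ℝ → ℝ) (t : ℝ) :
    0 ≤ energy1 L τ m p u θ q t := by
  have elastic := integral_mul_sq_nonneg hL hp (fun x => pdx u x t)
  have kinetic := integral_mul_sq_nonneg hL hm (fun x => pdt u x t)
  have temperature := integral_sq_nonneg hL (fun x => θ x t)
  have flux := integral_sq_nonneg hL (fun x => q x t)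
  unfold energy1
  positivity

lemma dissipation_nonneg (hL : 0 ≤ L) (hβ : 0 ≤ β) (hδ : ∀ x ∈ Icc 0 L, 0 ≤ δ x)
    (u q : ℝ → ℝ → ℝ) (t : ℝ) : 0 ≤ dissipation L β δ u q t := by
  have viscous := integral_mul_sq_nonneg hL hδ (fun x => pdx (pdt u) x t)
  have flux := integral_sq_nonneg hL (fun x => q x t)
  unfold dissipation
  positivity

lemma hasDerivAt_energy1 (hm : ContinuousOn m (uIcc 0 L)) (hp : ContinuousOn p (uIcc 0 L))
    (hu : JointlySmooth u) (hθ : JointlySmooth θ) (hq : JointlySmooth q) (t : ℝ) :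
    HasDerivAt (energy1 L τ m p u θ q)
      ((∫ x in (0 : ℝ)..L, p x * (pdx u x t * pdx (pdt u) x t))
        + (∫ x in (0 : ℝ)..L, m x * (pdt u x t * pdt (pdt u) x t))
        + (∫ x in (0 : ℝ)..L, θ x t * pdt θ x t)
        + τ * ∫ x in (0 : ℝ)..L, q x t * pdt q x t) t := by
  have elastic := hasDerivAt_integral_mul_sq hp hu.pdx t
  have kinetic := hasDerivAt_integral_mul_sq hm hu.pdt t
  have temperature :=
    hasDerivAt_integral_mul_sq (a := 0) (b := L) (w := fun _ => 1) continuousOn_const hθ t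
  have flux :=
    hasDerivAt_integral_mul_sq (a := 0) (b := L) (w := fun _ => 1) continuousOn_const hq t
  simp only [one_mul] at temperature flux
  rw [← hu.pdx_pdt] at elastic
  exact ((((elastic.add kinetic).add temperature).add (flux.const_mul τ)).const_mul
    (1 / 2)).congr_deriv (by ring)

namespace IsWeakSol

protected lemma pdt (hm : ContinuousOn m (uIcc 0 L)) (hδ : ContinuousOn δ (uIcc 0 L))
    (hp : ContinuousOn p (uIcc 0 L)) (h : IsWeakSol L η β κ τ m δ p u θ q) :
    IsWeakSol L η β κ τ m δ p (pdt u) (pdt θ) (pdt q) where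
  smooth_u := h.smooth_u.pdt
  smooth_θ := h.smooth_θ.pdt
  smooth_q := h.smooth_q.pdt
  boundary t ht :=
    ⟨eq_zero_of_hasDerivAt_of_forall_pos (h.smooth_u.hasDerivAt_time 0 t) ht
        fun s hs => (h.boundary s hs).1,
      eq_zero_of_hasDerivAt_of_forall_pos (h.smooth_u.hasDerivAt_time L t) ht
        fun s hs => (h.boundary s hs).2.1,
      eq_zero_of_hasDerivAt_of_forall_pos (h.smooth_θ.hasDerivAt_time 0 t) ht
        fun s hs => (h.boundary s hs).2.2.1,
      eq_zero_of_hasDerivAt_of_forall_pos (h.smooth_θ.hasDerivAt_time L t) ht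
        fun s hs => (h.boundary s hs).2.2.2⟩
  momentum t ht φ hφ hφ0 hφL :=
    eq_zero_of_hasDerivAt_of_forall_pos
      (hasDerivAt_weakMomentum hm hδ hp h.smooth_u h.smooth_θ hφ t) ht
      fun s hs => h.momentum s hs φ hφ hφ0 hφL
  heat x hx t ht := by
    rw [h.smooth_q.pdx_pdt, h.smooth_u.pdt.pdx_pdt]
    exact eq_zero_of_hasDerivAt_of_forall_pos
      (((h.smooth_θ.pdt.hasDerivAt_time x t).add
        ((h.smooth_q.pdx.hasDerivAt_time x t).const_mul κ)).add
        ((h.smooth_u.pdt.pdx.hasDerivAt_time x t).const_mul η)) ht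
      fun s hs => h.heat x hx s hs
  cattaneo x hx t ht := by
    rw [h.smooth_θ.pdx_pdt]
    exact eq_zero_of_hasDerivAt_of_forall_pos
      ((((h.smooth_q.pdt.hasDerivAt_time x t).const_mul τ).add
        ((h.smooth_q.hasDerivAt_time x t).const_mul β)).add
        ((h.smooth_θ.pdx.hasDerivAt_time x t).const_mul κ)) ht
      fun s hs => h.cattaneo x hx s hs

lemma thermal_balance (hL : 0 ≤ L) (h : IsWeakSol L η β κ τ m δ p u θ q) {t : ℝ} (ht : 0 < t) :
    (∫ x in (0 : ℝ)..L, θ x t * pdt θ x t) + τ * (∫ x in (0 : ℝ)..L, q x t * pdt q x t)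
      = η * (∫ x in (0 : ℝ)..L, pdt u x t * pdx θ x t) - β * ∫ x in (0 : ℝ)..L, q x t ^ 2 := by
  have cv := h.smooth_u.pdt.continuous_slice t
  have cv' := h.smooth_u.pdt.pdx.continuous_slice t
  have cθ := h.smooth_θ.continuous_slice t
  have cθ' := h.smooth_θ.pdx.continuous_slice t
  have cθt := h.smooth_θ.pdt.continuous_slice t
  have cq := h.smooth_q.continuous_slice t
  have cq' := h.smooth_q.pdx.continuous_slice t
  have cqt := h.smooth_q.pdt.continuous_slice t
  have flux_through_boundary : ∫ x in (0 : ℝ)..L, (κ * (pdx q x t * θ x t + q x t * pdx θ x t)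
      + η * (pdx (pdt u) x t * θ x t + pdt u x t * pdx θ x t)) = 0 := by
    rw [integral_eq_sub_of_hasDerivAt (f := fun x => κ * (q x t * θ x t) + η * (pdt u x t * θ x t))]
    · simp [(h.boundary t ht).2.2]
    · intro x _
      have hθ := h.smooth_θ.hasDerivAt_space x t
      exact (((h.smooth_q.hasDerivAt_space x t).mul hθ).const_mul κ).add
        (((h.smooth_u.pdt.hasDerivAt_space x t).mul hθ).const_mul η)
    · exact Continuous.intervalIntegrable (by fun_prop) _ _
  have balance : ∫ x in (0 : ℝ)..L, (η * (pdt u x t * pdx θ x t) - θ x t * pdt θ x t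
      - τ * (q x t * pdt q x t) - β * q x t ^ 2) = 0 := by
    refine Eq.trans ?_ flux_through_boundary
    apply integral_congr_Ioo_of_le hL
    intro x hx
    simp only
    linear_combination -θ x t * h.heat x hx t ht - q x t * h.cattaneo x hx t ht
  rw [intervalIntegral.integral_sub, intervalIntegral.integral_sub,
    intervalIntegral.integral_sub] at balance
  · simp only [intervalIntegral.integral_const_mul] at balance
    linarith
  all_goals exact Continuous.intervalIntegrable (by fun_prop) _ _

lemma hasDerivAt_energy1 (hL : 0 ≤ L) (hm : ContinuousOn m (uIcc 0 L))
    (hδ : ContinuousOn δ (uIcc 0 L)) (hp : ContinuousOn p (uIcc 0 L))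
    (h : IsWeakSol L η β κ τ m δ p u θ q) {t : ℝ} (ht : 0 < t) :
    HasDerivAt (energy1 L τ m p u θ q) (-dissipation L β δ u q t) t := by
  refine (_root_.hasDerivAt_energy1 hm hp h.smooth_u h.smooth_θ h.smooth_q t).congr_deriv ?_
  have hbdry := (h.pdt hm hδ hp).boundary t ht
  have power : (∫ x in (0 : ℝ)..L, m x * pdt u x t * pdt (pdt u) x t)
      + (∫ x in (0 : ℝ)..L, p x * pdx (pdt u) x t * pdx u x t)
      + 2 * (∫ x in (0 : ℝ)..L, δ x * pdx (pdt u) x t * pdx (pdt u) x t)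
      + η * (∫ x in (0 : ℝ)..L, pdt u x t * pdx θ x t) = 0 :=
    h.momentum t ht (fun x => pdt u x t) ((h.smooth_u.pdt.contDiff_slice t).of_le (by simp))
      hbdry.1 hbdry.2.1
  have thermal := h.thermal_balance hL ht
  simp only [mul_assoc, ← pow_two] at power
  simp only [mul_comm (pdx (pdt u) _ t) (pdx u _ t)] at power
  unfold dissipation
  linarith

end IsWeakSol

end System

/-- A quantity `X` attached to weak solutions is bounded, for all positive times, by a fixed
multiple of the dissipation of the solution plus that of its time derivative. -/
def ControlledByDissipation (L η β κ τ : ℝ) (m δ p : ℝ → ℝ)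
    (X : (ℝ → ℝ → ℝ) → (ℝ → ℝ → ℝ) → (ℝ → ℝ → ℝ) → ℝ → ℝ) : Prop :=
  ∃ K, ∀ u θ q, IsWeakSol L η β κ τ m δ p u θ q → ∀ t, 0 < t →
    X u θ q t ≤ K * (dissipation L β δ u q t + dissipation L β δ (pdt u) (pdt q) t)

namespace ControlledByDissipation

variable {L η β κ τ : ℝ} {m δ p : ℝ → ℝ}
  {X Y : (ℝ → ℝ → ℝ) → (ℝ → ℝ → ℝ) → (ℝ → ℝ → ℝ) → ℝ → ℝ}

lemma add (hX : ControlledByDissipation L η β κ τ m δ p X)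
    (hY : ControlledByDissipation L η β κ τ m δ p Y) :
    ControlledByDissipation L η β κ τ m δ p (fun u θ q t => X u θ q t + Y u θ q t) := by
  obtain ⟨K, hK⟩ := hX
  obtain ⟨K', hK'⟩ := hY
  refine ⟨K + K', fun u θ q h t ht => ?_⟩
  rw [add_mul]
  exact add_le_add (hK u θ q h t ht) (hK' u θ q h t ht)

lemma const_mul {c : ℝ} (hc : 0 ≤ c) (hX : ControlledByDissipation L η β κ τ m δ p X) :
    ControlledByDissipation L η β κ τ m δ p (fun u θ q t => c * X u θ q t) := by
  obtain ⟨K, hK⟩ := hX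
  refine ⟨c * K, fun u θ q h t ht => ?_⟩
  rw [mul_assoc]
  exact mul_le_mul_of_nonneg_left (hK u θ q h t ht) hc

lemma of_le (hX : ControlledByDissipation L η β κ τ m δ p X)
    (hYX : ∀ u θ q, IsWeakSol L η β κ τ m δ p u θ q → ∀ t, 0 < t → Y u θ q t ≤ X u θ q t) :
    ControlledByDissipation L η β κ τ m δ p Y := by
  obtain ⟨K, hK⟩ := hX
  exact ⟨K, fun u θ q h t ht => (hYX u θ q h t ht).trans (hK u θ q h t ht)⟩

end ControlledByDissipation

section Control

variable {L η β κ τ : ℝ} {m δ p : ℝ → ℝ}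

lemma controlledByDissipation_dissipation (hL : 0 ≤ L) (hβ : 0 ≤ β)
    (hδ : ∀ x ∈ Icc 0 L, 0 ≤ δ x) :
    ControlledByDissipation L η β κ τ m δ p (fun u _ q t => dissipation L β δ u q t) :=
  ⟨1, fun u _ q _ t _ => by linarith [dissipation_nonneg hL hβ hδ (pdt u) (pdt q) t]⟩

lemma controlledByDissipation_dissipation_pdt (hL : 0 ≤ L) (hβ : 0 ≤ β)
    (hδ : ∀ x ∈ Icc 0 L, 0 ≤ δ x) :
    ControlledByDissipation L η β κ τ m δ p
      (fun u _ q t => dissipation L β δ (pdt u) (pdt q) t) :=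
  ⟨1, fun u _ q _ t _ => by linarith [dissipation_nonneg hL hβ hδ u q t]⟩

lemma integral_flux_sq_le_dissipation (hL : 0 ≤ L) (hβ : 0 < β) (hδ : ∀ x ∈ Icc 0 L, 0 ≤ δ x)
    (u q : ℝ → ℝ → ℝ) (t : ℝ) :
    ∫ x in (0 : ℝ)..L, q x t ^ 2 ≤ β⁻¹ * dissipation L β δ u q t := by
  have viscous := integral_mul_sq_nonneg hL hδ (fun x => pdx (pdt u) x t)
  rw [le_inv_mul_iff₀ hβ]
  unfold dissipation
  linarith

lemma exists_integral_strain_rate_sq_le_dissipation (hL : 0 ≤ L) (hβ : 0 ≤ β)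
    (hδc : ContinuousOn δ (Icc 0 L)) (hδ : ∀ x ∈ Icc 0 L, 0 < δ x) :
    ∃ c, 0 ≤ c ∧ ∀ u q : ℝ → ℝ → ℝ, JointlySmooth u → ∀ t,
      ∫ x in (0 : ℝ)..L, pdx (pdt u) x t ^ 2 ≤ c * dissipation L β δ u q t := by
  obtain ⟨d, hd, hdδ⟩ := isCompact_Icc.exists_forall_le' hδc hδ
  refine ⟨(2 * d)⁻¹, by positivity, fun u q hu t => ?_⟩
  have viscous := mul_integral_sq_le_integral_mul_sq hL hδc
    (hu.pdt.pdx.continuous_slice t).continuousOn hdδ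
  have flux := mul_nonneg hβ (integral_sq_nonneg hL (fun x => q x t))
  rw [le_inv_mul_iff₀ (by positivity)]
  unfold dissipation
  linarith

lemma integral_sq_le_integral_pdx_sq (hL : 0 ≤ L) {f : ℝ → ℝ → ℝ} (hf : JointlySmooth f) {t : ℝ}
    (h0 : f 0 t = 0) :
    ∫ x in (0 : ℝ)..L, f x t ^ 2 ≤ 4 * L ^ 2 * ∫ x in (0 : ℝ)..L, pdx f x t ^ 2 := by
  simpa only [sub_zero] using poincare_inequality hL (fun x _ => hf.hasDerivAt_space x t)
    (hf.pdx.continuous_slice t).continuousOn h0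

lemma controlledByDissipation_strain_rate (hL : 0 ≤ L) (hβ : 0 ≤ β)
    (hδc : ContinuousOn δ (Icc 0 L)) (hδ : ∀ x ∈ Icc 0 L, 0 < δ x) :
    ControlledByDissipation L η β κ τ m δ p
      (fun u _ _ t => ∫ x in (0 : ℝ)..L, pdx (pdt u) x t ^ 2) := by
  obtain ⟨c, hc, hle⟩ := exists_integral_strain_rate_sq_le_dissipation hL hβ hδc hδ
  exact ((controlledByDissipation_dissipation hL hβ fun x hx => (hδ x hx).le).const_mul hc).of_le
    fun u _ q h t _ => hle u q h.smooth_u t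

lemma controlledByDissipation_acceleration (hL : 0 ≤ L) (hβ : 0 ≤ β)
    (hm : ContinuousOn m (Icc 0 L)) (hδc : ContinuousOn δ (Icc 0 L))
    (hδ : ∀ x ∈ Icc 0 L, 0 < δ x) (hp : ContinuousOn p (Icc 0 L)) :
    ControlledByDissipation L η β κ τ m δ p
      (fun u _ _ t => ∫ x in (0 : ℝ)..L, pdt (pdt u) x t ^ 2) := by
  obtain ⟨c, hc, hle⟩ := exists_integral_strain_rate_sq_le_dissipation hL hβ hδc hδ
  rw [← uIcc_of_le hL] at hm hδc hp
  refine (((controlledByDissipation_dissipation_pdt hL hβ fun x hx => (hδ x hx).le).const_mul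
    hc).const_mul (by positivity : 0 ≤ 4 * L ^ 2)).of_le fun u _ q h t ht => ?_
  refine (integral_sq_le_integral_pdx_sq hL h.smooth_u.pdt.pdt
    (((h.pdt hm hδc hp).pdt hm hδc hp).boundary t ht).1).trans ?_
  gcongr
  exact hle (pdt u) (pdt q) h.smooth_u.pdt t

lemma controlledByDissipation_temperature_gradient (hL : 0 ≤ L) (hβ : 0 < β) (hκ : κ ≠ 0)
    (hδ : ∀ x ∈ Icc 0 L, 0 ≤ δ x) :
    ControlledByDissipation L η β κ τ m δ p
      (fun _ θ _ t => ∫ x in (0 : ℝ)..L, pdx θ x t ^ 2) := by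
  have flux := (controlledByDissipation_dissipation (η := η) (κ := κ) (τ := τ) (m := m) (p := p)
    hL hβ.le hδ).const_mul (inv_nonneg.2 hβ.le)
  have flux_rate := (controlledByDissipation_dissipation_pdt (η := η) (κ := κ) (τ := τ) (m := m)
    (p := p) hL hβ.le hδ).const_mul (inv_nonneg.2 hβ.le)
  refine ((((flux_rate.const_mul (sq_nonneg τ)).add (flux.const_mul (sq_nonneg β))).const_mul
    zero_le_two).const_mul (inv_nonneg.2 (sq_nonneg κ))).of_le fun u θ q h t ht => ?_
  rw [le_inv_mul_iff₀ (by positivity)]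
  calc κ ^ 2 * ∫ x in (0 : ℝ)..L, pdx θ x t ^ 2
      = ∫ x in (0 : ℝ)..L, (τ * pdt q x t + β * q x t) ^ 2 := by
        rw [← intervalIntegral.integral_const_mul]
        apply integral_congr_Ioo_of_le hL
        intro x hx
        simp only
        linear_combination (κ * pdx θ x t - (τ * pdt q x t + β * q x t)) * h.cattaneo x hx t ht
    _ ≤ 2 * ((∫ x in (0 : ℝ)..L, (τ * pdt q x t) ^ 2) + ∫ x in (0 : ℝ)..L, (β * q x t) ^ 2) :=
        integral_add_sq_le hL
          ((h.smooth_q.pdt.continuous_slice t).const_mul τ).continuousOn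
          ((h.smooth_q.continuous_slice t).const_mul β).continuousOn
    _ ≤ _ := by
        simp only [mul_pow, intervalIntegral.integral_const_mul]
        gcongr
        · exact integral_flux_sq_le_dissipation hL hβ hδ _ _ t
        · exact integral_flux_sq_le_dissipation hL hβ hδ _ _ t

lemma controlledByDissipation_temperature (hL : 0 ≤ L) (hβ : 0 < β) (hκ : κ ≠ 0)
    (hδ : ∀ x ∈ Icc 0 L, 0 ≤ δ x) :
    ControlledByDissipation L η β κ τ m δ p (fun _ θ _ t => ∫ x in (0 : ℝ)..L, θ x t ^ 2) :=
  ((controlledByDissipation_temperature_gradient hL hβ hκ hδ).const_mul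
    (by positivity : 0 ≤ 4 * L ^ 2)).of_le fun _ _ _ h t ht =>
      integral_sq_le_integral_pdx_sq hL h.smooth_θ (h.boundary t ht).2.2.1

lemma controlledByDissipation_kinetic (hL : 0 ≤ L) (hβ : 0 ≤ β)
    (hm : ContinuousOn m (Icc 0 L)) (hδc : ContinuousOn δ (Icc 0 L))
    (hδ : ∀ x ∈ Icc 0 L, 0 < δ x) (hp : ContinuousOn p (Icc 0 L)) :
    ControlledByDissipation L η β κ τ m δ p
      (fun u _ _ t => ∫ x in (0 : ℝ)..L, m x * pdt u x t ^ 2) := by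
  obtain ⟨M, hM⟩ := isCompact_Icc.exists_bound_of_continuousOn hm
  have strain_rate := controlledByDissipation_strain_rate (η := η) (κ := κ) (τ := τ) (m := m)
    (p := p) hL hβ hδc hδ
  refine ((strain_rate.const_mul (by positivity : 0 ≤ 4 * L ^ 2)).const_mul
    (abs_nonneg M)).of_le fun u _ _ h t ht => ?_
  refine (integral_mul_sq_le_mul_integral_sq hL hm (h.smooth_u.pdt.continuous_slice t).continuousOn
    fun x hx => (le_abs_self _).trans ((hM x hx).trans (le_abs_self M))).trans ?_
  rw [← uIcc_of_le hL] at hm hδc hp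
  gcongr
  exact integral_sq_le_integral_pdx_sq hL h.smooth_u.pdt ((h.pdt hm hδc hp).boundary t ht).1

lemma IsWeakSol.integral_strain_sq_eq (hL : 0 ≤ L) (hm : ContinuousOn m (Icc 0 L))
    (hδ : ContinuousOn δ (Icc 0 L)) (hp : ContinuousOn p (Icc 0 L)) {u θ q : ℝ → ℝ → ℝ}
    (h : IsWeakSol L η β κ τ m δ p u θ q) {t : ℝ} (ht : 0 < t) :
    ∫ x in (0 : ℝ)..L, p x * pdx u x t ^ 2
      = -∫ x in (0 : ℝ)..L, ((m x * pdt (pdt u) x t + η * pdx θ x t) * u x t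
          + 2 * δ x * pdx (pdt u) x t * pdx u x t) := by
  rw [← uIcc_of_le hL] at hm hδ hp
  have hφ : ContDiff ℝ 1 (fun x => u x t) := (h.smooth_u.contDiff_slice t).of_le (by simp)
  have test := h.momentum t ht _ hφ (h.boundary t ht).1 (h.boundary t ht).2.1
  have displacement := h.smooth_u.continuous_slice t
  have strain := h.smooth_u.pdx.continuous_slice t
  have strain_rate := h.smooth_u.pdt.pdx.continuous_slice t
  have acceleration := h.smooth_u.pdt.pdt.continuous_slice t
  have gradient := h.smooth_θ.pdx.continuous_slice t
  rw [weakMomentum_eq_integral hm hδ hp h.smooth_u h.smooth_θ hφ] at test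
  rw [eq_neg_iff_add_eq_zero, ← intervalIntegral.integral_add]
  · refine Eq.trans ?_ test
    apply intervalIntegral.integral_congr
    intro x _
    simp only [pdx]
    ring
  all_goals exact ContinuousOn.intervalIntegrable (by fun_prop)

lemma controlledByDissipation_elastic (hL : 0 < L) (hβ : 0 < β) (hκ : κ ≠ 0)
    (hm : ContinuousOn m (Icc 0 L)) (hδc : ContinuousOn δ (Icc 0 L))
    (hδ : ∀ x ∈ Icc 0 L, 0 < δ x) (hpc : ContinuousOn p (Icc 0 L))
    (hp : ∀ x ∈ Icc 0 L, 0 < p x) :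
    ControlledByDissipation L η β κ τ m δ p
      (fun u _ _ t => ∫ x in (0 : ℝ)..L, p x * pdx u x t ^ 2) := by
  obtain ⟨P, hP, hPp⟩ := isCompact_Icc.exists_forall_le' hpc hp
  obtain ⟨M, hM⟩ := isCompact_Icc.exists_bound_of_continuousOn hm
  obtain ⟨N, hN⟩ := isCompact_Icc.exists_bound_of_continuousOn (hδc.const_mul 2)
  have acceleration := controlledByDissipation_acceleration (η := η) (κ := κ) (τ := τ)
    hL.le hβ.le hm hδc hδ hpc
  have gradient := controlledByDissipation_temperature_gradient (η := η) (τ := τ) (m := m)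
    (p := p) hL.le hβ hκ fun x hx => (hδ x hx).le
  have strain_rate := controlledByDissipation_strain_rate (η := η) (κ := κ) (τ := τ) (m := m)
    (p := p) hL.le hβ.le hδc hδ
  have force := ((acceleration.const_mul (sq_nonneg M)).add
    (gradient.const_mul (sq_nonneg η))).const_mul zero_le_two
  refine (((force.const_mul (by positivity : 0 ≤ 4 * (L - 0) ^ 2)).add
    (strain_rate.const_mul (sq_nonneg N))).const_mul (by positivity : 0 ≤ 2 / P)).of_le
      fun u θ q h t ht => ?_
  have cu' := (h.smooth_u.pdx.continuous_slice t).continuousOn (s := Icc 0 L)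
  have cv' := (h.smooth_u.pdt.pdx.continuous_slice t).continuousOn (s := Icc 0 L)
  have ca := (h.smooth_u.pdt.pdt.continuous_slice t).continuousOn (s := Icc 0 L)
  have cθ' := (h.smooth_θ.pdx.continuous_slice t).continuousOn (s := Icc 0 L)
  refine (integral_mul_deriv_sq_le_of_weak_form hL hP hPp hpc
    ((hm.mul ca).add (cθ'.const_mul η)) ((hδc.const_mul 2).mul cv')
    (fun x _ => h.smooth_u.hasDerivAt_space x t) cu' (h.boundary t ht).1
    (h.integral_strain_sq_eq hL.le hm hδc hpc ht)).trans ?_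
  gcongr
  · refine (integral_add_sq_le hL.le (hm.mul ca) (cθ'.const_mul η)).trans ?_
    gcongr
    · exact integral_mul_pow_two_le_sq_mul_integral_sq hL.le hm ca hM
    · simp only [mul_pow, intervalIntegral.integral_const_mul, le_refl]
  · exact integral_mul_pow_two_le_sq_mul_integral_sq hL.le (hδc.const_mul 2) cv' hN

theorem controlledByDissipation_energy1 (hL : 0 < L) (hβ : 0 < β) (hκ : κ ≠ 0) (hτ : 0 ≤ τ)
    (hm : ContinuousOn m (Icc 0 L)) (hδc : ContinuousOn δ (Icc 0 L))
    (hδ : ∀ x ∈ Icc 0 L, 0 < δ x) (hpc : ContinuousOn p (Icc 0 L))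
    (hp : ∀ x ∈ Icc 0 L, 0 < p x) :
    ControlledByDissipation L η β κ τ m δ p (energy1 L τ m p) := by
  have hδ' : ∀ x ∈ Icc 0 L, 0 ≤ δ x := fun x hx => (hδ x hx).le
  have flux : ControlledByDissipation L η β κ τ m δ p
      (fun _ _ q t => ∫ x in (0 : ℝ)..L, q x t ^ 2) :=
    ((controlledByDissipation_dissipation hL.le hβ.le hδ').const_mul (inv_nonneg.2 hβ.le)).of_le
      fun u _ q _ t _ => integral_flux_sq_le_dissipation hL.le hβ hδ' u q t
  exact ((((controlledByDissipation_elastic hL hβ hκ hm hδc hδ hpc hp).add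
    (controlledByDissipation_kinetic hL.le hβ.le hm hδc hδ hpc)).add
    (controlledByDissipation_temperature hL.le hβ hκ hδ')).add (flux.const_mul hτ)).const_mul
    one_half_pos.le

end Control

/-- Since `E ≤ K (D + G)`, the functional `s E(s) + K (E + F)(s)` is nonincreasing. -/
lemma le_mul_add_div_of_hasDerivAt_neg {E F D G : ℝ → ℝ} {K : ℝ} (hK : 0 ≤ K)
    (hEc : ContinuousOn E (Ici 0)) (hFc : ContinuousOn F (Ici 0))
    (hE : ∀ s, 0 < s → HasDerivAt E (-D s) s) (hF : ∀ s, 0 < s → HasDerivAt F (-G s) s)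
    (hD : ∀ s, 0 < s → 0 ≤ D s) (hE0 : ∀ s, 0 < s → 0 ≤ E s) (hF0 : ∀ s, 0 < s → 0 ≤ F s)
    (hle : ∀ s, 0 < s → E s ≤ K * (D s + G s)) {t : ℝ} (ht : 0 < t) :
    E t ≤ K * (E 0 + F 0) / t := by
  have hderiv : ∀ s, 0 < s → HasDerivAt (fun s => s * E s + K * (E s + F s))
      (E s - s * D s - K * (D s + G s)) s := fun s hs =>
    (((hasDerivAt_id s).mul (hE s hs)).add (((hE s hs).add (hF s hs)).const_mul K)).congr_deriv
      (by simp only [id]; ring)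
  have hanti : AntitoneOn (fun s => s * E s + K * (E s + F s)) (Ici 0) := by
    refine antitoneOn_of_deriv_nonpos (convex_Ici 0) (by fun_prop) ?_ ?_ <;>
      rw [interior_Ici]
    · exact fun s hs => (hderiv s hs).differentiableAt.differentiableWithinAt
    · intro s hs
      rw [(hderiv s hs).deriv]
      linarith [hle s hs, mul_nonneg (le_of_lt hs) (hD s hs)]
  have hend := hanti self_mem_Ici (mem_Ici.2 ht.le) ht.le
  simp only [zero_mul, zero_add] at hend
  rw [le_div_iff₀ ht]
  linarith [mul_nonneg hK (add_nonneg (hE0 t ht) (hF0 t ht))]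

theorem polynomial_decay_first_energy_general
    (L η β κ τ : ℝ) (hL : 0 < L) (hβ : 0 < β) (hκ : κ ≠ 0) (hτ : 0 ≤ τ) (m δ p : ℝ → ℝ)
    (hm : ContinuousOn m (Icc 0 L)) (hδ : AbsolutelyContinuousOnInterval δ 0 L)
    (hp : AbsolutelyContinuousOnInterval p 0 L) (hm0 : ∀ x ∈ Icc (0 : ℝ) L, 0 ≤ m x)
    (hδ0 : ∀ x ∈ Icc (0 : ℝ) L, 0 < δ x) (hp0 : ∀ x ∈ Icc (0 : ℝ) L, 0 < p x) :
    ∃ C > (0 : ℝ), ∀ u θ q : ℝ → ℝ → ℝ, IsSmoothSol L η β κ τ m δ p u θ q → BCD L u θ →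
      ∀ t : ℝ, 0 < t →
        energy1 L τ m p u θ q t
          ≤ C * (energy1 L τ m p u θ q 0 + energy2 L τ m p u θ q 0) / t := by
  have hI := uIcc_of_le hL.le
  have hδ0' := fun x hx => (hδ0 x hx).le
  obtain ⟨K, hK⟩ := controlledByDissipation_energy1 (η := η) hL hβ hκ hτ hm
    (hI ▸ hδ.continuousOn) hδ0 (hI ▸ hp.continuousOn) hp0
  rw [← hI] at hm
  refine ⟨max K 1, by positivity, fun u θ q hsol hb t ht => ?_⟩
  have h := isWeakSol_of_isSmoothSol hL.le (hI ▸ hm) hδ hp hsol hb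
  have h' := h.pdt hm hδ.continuousOn hp.continuousOn
  have hD := dissipation_nonneg hL.le hβ.le hδ0'
  have hE := energy1_nonneg hL.le hτ hm0 fun x hx => (hp0 x hx).le
  have hEc {u θ q : ℝ → ℝ → ℝ} (h : IsWeakSol L η β κ τ m δ p u θ q) :
      ContinuousOn (energy1 L τ m p u θ q) (Ici 0) := fun t _ =>
    (hasDerivAt_energy1 hm hp.continuousOn h.smooth_u h.smooth_θ
      h.smooth_q t).continuousAt.continuousWithinAt
  rw [energy2_eq_energy1_pdt h.smooth_u]
  refine le_mul_add_div_of_hasDerivAt_neg (by positivity) (hEc h) (hEc h')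
    (fun s hs => h.hasDerivAt_energy1 hL.le hm hδ.continuousOn hp.continuousOn hs)
    (fun s hs => h'.hasDerivAt_energy1 hL.le hm hδ.continuousOn hp.continuousOn hs)
    (fun s _ => hD u q s) (fun s _ => hE u θ q s) (fun s _ => hE _ _ _ s)
    (fun s hs => (hK u θ q h s hs).trans ?_) ht
  exact mul_le_mul_of_nonneg_right (le_max_left K 1) (add_nonneg (hD _ _ s) (hD _ _ s))

/-- Polynomial decay of the first-order energy. -/
theorem polynomial_decay_first_energy
    (L η β κ τ : ℝ) (hL : 0 < L) (hη : 0 < η) (hβ : 0 < β) (hκ : 0 < κ) (hτ : 0 < τ)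
    (m δ p : ℝ → ℝ)
    (hmLip : ∃ K, LipschitzOnWith K m (Icc 0 L))
    (hδLip : ∃ K, LipschitzOnWith K δ (Icc 0 L))
    (hpLip : ∃ K, LipschitzOnWith K p (Icc 0 L))
    (hmpos : ∀ x ∈ Icc (0 : ℝ) L, 0 < m x)
    (hδpos : ∀ x ∈ Icc (0 : ℝ) L, 0 < δ x)
    (hppos : ∀ x ∈ Icc (0 : ℝ) L, 0 < p x)
    :
    ∃ C > (0 : ℝ),
      ∀ u θ q : ℝ → ℝ → ℝ,
        IsSmoothSol L η β κ τ m δ p u θ q → BCD L u θ →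
          ∀ t : ℝ, 0 < t →
            energy1 L τ m p u θ q t
              ≤ C * (energy1 L τ m p u θ q 0 + energy2 L τ m p u θ q 0) / t := by
  obtain ⟨_, hm⟩ := hmLip
  obtain ⟨_, hδ⟩ := hδLip
  obtain ⟨_, hp⟩ := hpLip
  have hI := uIcc_of_le hL.le
  exact polynomial_decay_first_energy_general L η β κ τ hL hβ hκ.ne' hτ.le m δ p hm.continuousOn
    (hI ▸ hδ).absolutelyContinuousOnInterval (hI ▸ hp).absolutelyContinuousOnInterval
    (fun x hx => (hmpos x hx).le) hδpos hppos
end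
end

section
/- There exists a constant C > 0, depending only on L, η, β, κ, τ, m, δ and p (and independent of λ), such that every solution (u, w, θ, q) of the resolvent system with data (f₁, f₂, f₃, f₄) satisfies ∫₀ᴸ p(x) |u′(x)|² dx ≤ C ( ‖F‖ ‖U‖ + ∫₀ᴸ |θ(x)|² dx ). -/
open MeasureTheory Set intervalIntegral Complex

noncomputable section

/-- A (smooth) solution of the resolvent system `(iλ − 𝒜)U = F` with clamped/zero-flux
boundary conditions: the four ODEs on `(0, L)` together with
`u(0) = u(L) = 0`, `w(0) = w(L) = 0`, `q(0) = q(L) = 0`. -/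
def ResolventSol (L η β κ τ : ℝ) (m δ p : ℝ → ℝ) (lam : ℝ)
    (f₁ f₂ f₃ f₄ u w θ q : ℝ → ℂ) : Prop :=
  ContDiff ℝ (⊤ : ℕ∞) u ∧ ContDiff ℝ (⊤ : ℕ∞) w ∧ ContDiff ℝ (⊤ : ℕ∞) θ ∧ ContDiff ℝ (⊤ : ℕ∞) q ∧
  ContDiff ℝ (⊤ : ℕ∞) f₁ ∧ ContDiff ℝ (⊤ : ℕ∞) f₂ ∧ ContDiff ℝ (⊤ : ℕ∞) f₃ ∧ ContDiff ℝ (⊤ : ℕ∞) f₄ ∧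
  (∀ x ∈ Ioo (0 : ℝ) L,
    (Complex.I * (lam : ℂ) * u x - w x = f₁ x) ∧
    (Complex.I * (lam : ℂ) * (m x : ℂ) * w x
        - deriv (fun y => (p y : ℂ) * deriv u y + 2 * (δ y : ℂ) * deriv w y) x
        + (η : ℂ) * deriv θ x = (m x : ℂ) * f₂ x) ∧
    (Complex.I * (lam : ℂ) * θ x
        + deriv (fun y => (κ : ℂ) * q y + (η : ℂ) * w y) x = f₃ x) ∧
    (Complex.I * (lam : ℂ) * (τ : ℂ) * q x + (κ : ℂ) * deriv θ x + (β : ℂ) * q x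
        = (τ : ℂ) * f₄ x)) ∧
  u 0 = 0 ∧ u L = 0 ∧ w 0 = 0 ∧ w L = 0 ∧ q 0 = 0 ∧ q L = 0

/-- Squared phase-space norm of `U = (u, w, θ, q)`. -/
def normUsq (L τ : ℝ) (m p : ℝ → ℝ) (u w θ q : ℝ → ℂ) : ℝ :=
  (∫ x in (0 : ℝ)..L, p x * ‖deriv u x‖ ^ 2) + (∫ x in (0 : ℝ)..L, m x * ‖w x‖ ^ 2)
    + (∫ x in (0 : ℝ)..L, ‖θ x‖ ^ 2) + τ * ∫ x in (0 : ℝ)..L, ‖q x‖ ^ 2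

/-- Squared phase-space norm of the data `F = (f₁, f₂, f₃, f₄)`. -/
def normFsq (L τ : ℝ) (m p : ℝ → ℝ) (f₁ f₂ f₃ f₄ : ℝ → ℂ) : ℝ :=
  (∫ x in (0 : ℝ)..L, p x * ‖deriv f₁ x‖ ^ 2) + (∫ x in (0 : ℝ)..L, m x * ‖f₂ x‖ ^ 2)
    + (∫ x in (0 : ℝ)..L, ‖f₃ x‖ ^ 2) + τ * ∫ x in (0 : ℝ)..L, ‖f₄ x‖ ^ 2

/-!
Testing the momentum equation with `w` and adding the heat and Cattaneo equations tested with `θ`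
and `q`, the coupling terms cancel and every term carrying `iλ` is skew, so that
`2 ∫ δ |w′|² + β ∫ |q|² = Re ⟨F, U⟩ ≤ ‖F‖ ‖U‖`. Testing the momentum equation with `u` instead and
replacing `iλu` by `w + f₁` gives

`∫ p |u′|² = ∫ m |w|² + Re ∫ m (f̄₁ w + f̄₂ u) - 2 Re ∫ δ w̄′u′ + η Re ∫ θ̄ u′`,

where `λ` no longer appears. Poincaré's inequality bounds `∫ m |w|²` by the dissipation and the
loads by `‖F‖ ‖U‖`; Young's inequality absorbs a quarter of `∫ p |u′|²` in each of the last two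
terms.

The coefficients `p` and `δ` are differentiable only almost everywhere, so the integration by
parts rests on absolute continuity of the stress paired with the test function.
-/

open scoped RealInnerProductSpace

/-- The pairing `∫ₐᵇ r ⟪f, g⟫` with weight `r`, over the reals. For complex-valued functions
`⟪z, w⟫ = Re (z̄ w)`, so that each term of the two phase-space norms is a pairing of a function
with itself. -/
def weightedInner {E : Type*} [NormedAddCommGroup E] [InnerProductSpace ℝ E]
    (a b : ℝ) (r : ℝ → ℝ) (f g : ℝ → E) : ℝ :=
  ∫ x in a..b, r x * ⟪f x, g x⟫

section WeightedInner

variable {E : Type*} [NormedAddCommGroup E] [InnerProductSpace ℝ E]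
  {a b : ℝ} {r s : ℝ → ℝ} {f f' g h v : ℝ → E}

lemma weightedInner_self (a b : ℝ) (r : ℝ → ℝ) (f : ℝ → E) :
    weightedInner a b r f f = ∫ x in a..b, r x * ‖f x‖ ^ 2 := by
  simp only [weightedInner, real_inner_self_eq_norm_sq]

lemma weightedInner_one_self (a b : ℝ) (f : ℝ → E) :
    weightedInner a b 1 f f = ∫ x in a..b, ‖f x‖ ^ 2 := by
  simp only [weightedInner_self, Pi.one_apply, one_mul]

lemma weightedInner_comm (a b : ℝ) (r : ℝ → ℝ) (f g : ℝ → E) :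
    weightedInner a b r f g = weightedInner a b r g f := by
  simp only [weightedInner, real_inner_comm]

lemma weightedInner_smul_left (a b : ℝ) (r : ℝ → ℝ) (c : ℝ) (f g : ℝ → E) :
    weightedInner a b r (fun x => c • f x) g = c * weightedInner a b r f g := by
  simp only [weightedInner, real_inner_smul_left, mul_left_comm _ c,
    intervalIntegral.integral_const_mul]

lemma weightedInner_congr_left (hab : a ≤ b) (hff' : EqOn f f' (Ioo a b)) :
    weightedInner a b r f g = weightedInner a b r f' g :=
  intervalIntegral.integral_congr_Ioo_of_le hab fun x hx => by simp only [hff' hx]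

lemma intervalIntegrable_mul_inner (hab : a ≤ b) (hr : ContinuousOn r (Icc a b))
    (hf : ContinuousOn f (Icc a b)) (hg : ContinuousOn g (Icc a b)) :
    IntervalIntegrable (fun x => r x * ⟪f x, g x⟫) volume a b :=
  (hr.mul (ContinuousOn.inner (𝕜 := ℝ) hf hg)).intervalIntegrable_of_Icc hab

lemma weightedInner_add_left (hab : a ≤ b) (hr : ContinuousOn r (Icc a b))
    (hf : ContinuousOn f (Icc a b)) (hg : ContinuousOn g (Icc a b))
    (hh : ContinuousOn h (Icc a b)) :
    weightedInner a b r (fun x => f x + g x) h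
      = weightedInner a b r f h + weightedInner a b r g h := by
  simp only [weightedInner, inner_add_left, mul_add]
  exact intervalIntegral.integral_add (intervalIntegrable_mul_inner hab hr hf hh)
    (intervalIntegrable_mul_inner hab hr hg hh)

lemma weightedInner_sub_left (hab : a ≤ b) (hr : ContinuousOn r (Icc a b))
    (hf : ContinuousOn f (Icc a b)) (hg : ContinuousOn g (Icc a b))
    (hh : ContinuousOn h (Icc a b)) :
    weightedInner a b r (fun x => f x - g x) h
      = weightedInner a b r f h - weightedInner a b r g h := by
  simp only [weightedInner, inner_sub_left, mul_sub]
  exact intervalIntegral.integral_sub (intervalIntegrable_mul_inner hab hr hf hh)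
    (intervalIntegrable_mul_inner hab hr hg hh)

lemma weightedInner_self_nonneg (hab : a ≤ b) (hr₀ : ∀ x ∈ Icc a b, 0 ≤ r x) (f : ℝ → E) :
    0 ≤ weightedInner a b r f f :=
  intervalIntegral.integral_nonneg hab fun x hx => mul_nonneg (hr₀ x hx) real_inner_self_nonneg

lemma weightedInner_self_le_of_weight_le (hab : a ≤ b) (hr : ContinuousOn r (Icc a b))
    (hs : ContinuousOn s (Icc a b)) {c : ℝ} (hrs : ∀ x ∈ Icc a b, r x ≤ c * s x)
    (hf : ContinuousOn f (Icc a b)) :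
    weightedInner a b r f f ≤ c * weightedInner a b s f f := by
  simp only [weightedInner, ← intervalIntegral.integral_const_mul, ← mul_assoc]
  exact intervalIntegral.integral_mono_on hab (intervalIntegrable_mul_inner hab hr hf hf)
    (intervalIntegrable_mul_inner hab (hs.const_mul c) hf hf)
    fun x hx => mul_le_mul_of_nonneg_right (hrs x hx) real_inner_self_nonneg

theorem abs_weightedInner_le_sqrt_mul_sqrt (hab : a ≤ b) (hr : ContinuousOn r (Icc a b))
    (hr₀ : ∀ x ∈ Icc a b, 0 ≤ r x) (hf : ContinuousOn f (Icc a b))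
    (hg : ContinuousOn g (Icc a b)) :
    |weightedInner a b r f g| ≤ √(weightedInner a b r f f) * √(weightedInner a b r g g) := by
  have quadratic_nonneg (t : ℝ) : 0 ≤ weightedInner a b r f f * (t * t)
      + 2 * weightedInner a b r f g * t + weightedInner a b r g g := by
    have htf : ContinuousOn (fun x => t • f x) (Icc a b) := hf.const_smul t
    have htfg : ContinuousOn (fun x => t • f x + g x) (Icc a b) := htf.add hg
    have expand : weightedInner a b r (fun x => t • f x + g x) (fun x => t • f x + g x)
        = weightedInner a b r f f * (t * t) + 2 * weightedInner a b r f g * t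
          + weightedInner a b r g g := by
      rw [weightedInner_add_left hab hr htf hg htfg, weightedInner_smul_left,
        weightedInner_comm _ _ _ f, weightedInner_comm _ _ _ g,
        weightedInner_add_left hab hr htf hg hf, weightedInner_add_left hab hr htf hg hg,
        weightedInner_smul_left, weightedInner_smul_left, weightedInner_comm _ _ _ g f]
      ring
    exact expand ▸ weightedInner_self_nonneg hab hr₀ _
  rw [← Real.sqrt_mul (weightedInner_self_nonneg hab hr₀ f)]
  apply Real.abs_le_sqrt
  have discrim_nonpos := discrim_le_zero quadratic_nonneg
  rw [discrim] at discrim_nonpos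
  linarith

theorem mul_weightedInner_le_add_quarter (hab : a ≤ b) (hr : ContinuousOn r (Icc a b))
    (hr₀ : ∀ x ∈ Icc a b, 0 ≤ r x) (hs : ContinuousOn s (Icc a b)) {c : ℝ} (hc : 0 < c)
    (hrs : ∀ x ∈ Icc a b, r x ≤ c * s x) (hf : ContinuousOn f (Icc a b))
    (hg : ContinuousOn g (Icc a b)) (t : ℝ) :
    t * weightedInner a b r f g
      ≤ t ^ 2 * c * weightedInner a b r f f + weightedInner a b s g g / 4 := by
  have energy_le := weightedInner_self_le_of_weight_le hab hr hs hrs hg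
  have young := two_mul_le_add_sq (2 * c * |t| * √(weightedInner a b r f f))
    √(weightedInner a b r g g)
  simp only [mul_pow, sq_abs, Real.sq_sqrt (weightedInner_self_nonneg hab hr₀ _)] at young
  calc t * weightedInner a b r f g
      ≤ |t| * |weightedInner a b r f g| := (le_abs_self _).trans_eq (abs_mul _ _)
    _ ≤ |t| * (√(weightedInner a b r f f) * √(weightedInner a b r g g)) := by
        gcongr; exact abs_weightedInner_le_sqrt_mul_sqrt hab hr hr₀ hf hg
    _ ≤ t ^ 2 * c * weightedInner a b r f f + weightedInner a b s g g / 4 :=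
        le_of_mul_le_mul_left (by linarith) (mul_pos four_pos hc)

theorem weightedInner_le_sqrt_mul_sqrt_mul_sqrt (hab : a ≤ b) (hr : ContinuousOn r (Icc a b))
    (hr₀ : ∀ x ∈ Icc a b, 0 ≤ r x) (hf : ContinuousOn f (Icc a b))
    (hg : ContinuousOn g (Icc a b)) {C F G : ℝ} (hC : 0 ≤ C)
    (hfF : weightedInner a b r f f ≤ C * F) (hgG : weightedInner a b r g g ≤ G) :
    weightedInner a b r f g ≤ √C * (√F * √G) :=
  calc weightedInner a b r f g
      ≤ √(weightedInner a b r f f) * √(weightedInner a b r g g) :=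
        le_of_abs_le (abs_weightedInner_le_sqrt_mul_sqrt hab hr hr₀ hf hg)
    _ ≤ √(C * F) * √G := by gcongr
    _ = √C * (√F * √G) := by rw [Real.sqrt_mul hC, mul_assoc]

theorem weightedInner_one_deriv_left (hf : ContDiff ℝ 1 f) (hg : ContDiff ℝ 1 g)
    (hfa : f a = 0) (hfb : f b = 0) :
    weightedInner a b 1 (deriv f) g = -weightedInner a b 1 f (deriv g) := by
  have h₁ : Continuous fun x => ⟪f x, deriv g x⟫ := hf.continuous.inner hg.continuous_deriv_one
  have h₂ : Continuous fun x => ⟪deriv f x, g x⟫ := hf.continuous_deriv_one.inner hg.continuous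
  have boundary : ∫ x in a..b, (⟪f x, deriv g x⟫ + ⟪deriv f x, g x⟫) = 0 := by
    rw [intervalIntegral.integral_eq_sub_of_hasDerivAt
      (fun x _ => (hf.differentiable_one x).hasDerivAt.inner ℝ
        (hg.differentiable_one x).hasDerivAt)
      ((h₁.add h₂).intervalIntegrable _ _)]
    simp only [hfa, hfb, inner_zero_left, sub_zero]
  rw [intervalIntegral.integral_add (h₁.intervalIntegrable _ _)
    (h₂.intervalIntegrable _ _)] at boundary
  simp only [weightedInner, Pi.one_apply, one_mul]
  linarith

section Poincare

variable [CompleteSpace E]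

lemma norm_sq_le_mul_weightedInner_deriv (hv : ContDiff ℝ 1 v) (hva : v a = 0) {x : ℝ}
    (hx : x ∈ Icc a b) :
    ‖v x‖ ^ 2 ≤ (b - a) * weightedInner a b 1 (deriv v) (deriv v) := by
  have hab : a ≤ b := hx.1.trans hx.2
  have hv' : Continuous (deriv v) := hv.continuous_deriv_one
  have norm_le : ‖v x‖ ≤ ∫ y in a..b, ‖deriv v y‖ := calc
    ‖v x‖ = ‖∫ y in a..x, deriv v y‖ := by
      rw [intervalIntegral.integral_deriv_eq_sub
        (fun y _ => hv.differentiable_one y) (hv'.intervalIntegrable _ _), hva, sub_zero]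
    _ ≤ ∫ y in a..x, ‖deriv v y‖ := intervalIntegral.norm_integral_le_integral_norm hx.1
    _ ≤ ∫ y in a..b, ‖deriv v y‖ :=
      intervalIntegral.integral_mono_interval le_rfl hx.1 hx.2
        (Filter.Eventually.of_forall fun y => norm_nonneg _) (hv'.norm.intervalIntegrable _ _)
  have energy_nonneg : 0 ≤ weightedInner a b 1 (deriv v) (deriv v) :=
    weightedInner_self_nonneg hab (fun _ _ => zero_le_one) _
  have integral_le :
      ∫ y in a..b, ‖deriv v y‖ ≤ √(weightedInner a b 1 (deriv v) (deriv v)) * √(b - a) := by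
    simpa [weightedInner] using le_of_abs_le (abs_weightedInner_le_sqrt_mul_sqrt (r := 1)
      (f := fun y => ‖deriv v y‖) (g := fun _ => (1 : ℝ)) hab continuousOn_const
      (fun _ _ => zero_le_one) hv'.norm.continuousOn continuousOn_const)
  calc ‖v x‖ ^ 2 ≤ (√(weightedInner a b 1 (deriv v) (deriv v)) * √(b - a)) ^ 2 := by
        gcongr; exact norm_le.trans integral_le
    _ = (b - a) * weightedInner a b 1 (deriv v) (deriv v) := by
        rw [mul_pow, Real.sq_sqrt (sub_nonneg.2 hab), Real.sq_sqrt energy_nonneg, mul_comm]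

theorem weightedInner_one_self_le_mul_deriv (hab : a ≤ b) (hv : ContDiff ℝ 1 v) (hva : v a = 0) :
    weightedInner a b 1 v v ≤ (b - a) ^ 2 * weightedInner a b 1 (deriv v) (deriv v) := by
  rw [weightedInner_one_self]
  calc ∫ x in a..b, ‖v x‖ ^ 2
      ≤ ∫ _ in a..b, (b - a) * weightedInner a b 1 (deriv v) (deriv v) :=
        intervalIntegral.integral_mono_on hab
          ((hv.continuous.norm.pow 2).intervalIntegrable _ _) intervalIntegrable_const
          fun x hx => norm_sq_le_mul_weightedInner_deriv hv hva hx
    _ = (b - a) ^ 2 * weightedInner a b 1 (deriv v) (deriv v) := by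
        rw [intervalIntegral.integral_const, smul_eq_mul]; ring

end Poincare

lemma exists_pos_forall_le_mul_of_isCompact {X : Type*} [TopologicalSpace X] {K : Set X}
    (hK : IsCompact K) {r s : X → ℝ} (hr : ContinuousOn r K) (hs : ContinuousOn s K)
    (hs₀ : ∀ x ∈ K, 0 < s x) : ∃ c > 0, ∀ x ∈ K, r x ≤ c * s x := by
  obtain ⟨c, hc⟩ := hK.exists_bound_of_continuousOn (hr.div hs fun x hx => (hs₀ x hx).ne')
  refine ⟨max c 1, by positivity, fun x hx => (div_le_iff₀ (hs₀ x hx)).1 ?_⟩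
  exact (le_abs_self _).trans ((hc x hx).trans (le_max_left _ _))

theorem exists_weightedInner_self_le_mul_deriv [CompleteSpace E] (hab : a ≤ b)
    (hr : ContinuousOn r (Icc a b)) (hs : ContinuousOn s (Icc a b))
    (hs₀ : ∀ x ∈ Icc a b, 0 < s x) :
    ∃ C ≥ 0, ∀ v : ℝ → E, ContDiff ℝ 1 v → v a = 0 →
      weightedInner a b r v v ≤ C * weightedInner a b s (deriv v) (deriv v) := by
  have one_cont : ContinuousOn (1 : ℝ → ℝ) (Icc a b) := continuousOn_const
  obtain ⟨c, hc, hrc⟩ := exists_pos_forall_le_mul_of_isCompact isCompact_Icc hr one_cont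
    fun _ _ => zero_lt_one
  obtain ⟨k, hk, hsk⟩ := exists_pos_forall_le_mul_of_isCompact isCompact_Icc one_cont hs hs₀
  refine ⟨c * ((b - a) ^ 2 * k), by positivity, fun v hv hva => ?_⟩
  calc weightedInner a b r v v ≤ c * weightedInner a b 1 v v :=
        weightedInner_self_le_of_weight_le hab hr one_cont hrc hv.continuous.continuousOn
    _ ≤ c * ((b - a) ^ 2 * weightedInner a b 1 (deriv v) (deriv v)) := by
        gcongr; exact weightedInner_one_self_le_mul_deriv hab hv hva
    _ ≤ c * ((b - a) ^ 2 * (k * weightedInner a b s (deriv v) (deriv v))) := by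
        gcongr
        exact weightedInner_self_le_of_weight_le hab one_cont hs hsk
          hv.continuous_deriv_one.continuousOn
    _ = c * ((b - a) ^ 2 * k) * weightedInner a b s (deriv v) (deriv v) := by ring

end WeightedInner

lemma inner_I_mul_left (t : ℝ) (z ζ : ℂ) : ⟪I * t * z, ζ⟫ = -⟪z, I * t * ζ⟫ := by
  simp only [Complex.inner, map_mul, conj_I, conj_ofReal, ← neg_re]
  congr 1
  ring

lemma weightedInner_I_mul_left (a b : ℝ) (r : ℝ → ℝ) (t : ℝ) (f g : ℝ → ℂ) :
    weightedInner a b r (fun x => I * t * f x) g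
      = -weightedInner a b r f (fun x => I * t * g x) := by
  simp only [weightedInner, inner_I_mul_left, mul_neg, intervalIntegral.integral_neg]

lemma weightedInner_I_mul_self (a b : ℝ) (r : ℝ → ℝ) (t : ℝ) (f : ℝ → ℂ) :
    weightedInner a b r (fun x => I * t * f x) f = 0 := by
  linarith [weightedInner_I_mul_left a b r t f f,
    weightedInner_comm a b r f fun x => I * t * f x]

lemma integral_eq_sub_of_ae_hasDerivAt {a b : ℝ} {g g' : ℝ → ℝ} (hab : a ≤ b)
    (hg : AbsolutelyContinuousOnInterval g a b)
    (hg' : ∀ᵐ x, x ∈ Ioo a b → HasDerivAt g (g' x) x) :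
    ∫ x in a..b, g' x = g b - g a := by
  rw [← hg.integral_deriv_eq_sub]
  apply intervalIntegral.integral_congr_ae
  filter_upwards [hg', Measure.ae_ne volume b] with x hx hxb hxab
  rw [uIoc_of_le hab] at hxab
  exact (hx ⟨hxab.1, hxab.2.lt_of_ne hxb⟩).deriv.symm

section Stress

variable {E : Type*} [NormedAddCommGroup E] [InnerProductSpace ℝ E]
  {a b : ℝ} {δ p : ℝ → ℝ} {u w v : ℝ → E}

/-- The viscoelastic stress `p u′ + 2 δ w′` of the momentum equation. -/
def stress (p δ : ℝ → ℝ) (u w : ℝ → E) (x : ℝ) : E :=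
  p x • deriv u x + (2 * δ x) • deriv w x

lemma inner_stress (p δ : ℝ → ℝ) (u w : ℝ → E) (x : ℝ) (z : E) :
    ⟪stress p δ u w x, z⟫ = p x * ⟪deriv u x, z⟫ + 2 * (δ x * ⟪deriv w x, z⟫) := by
  rw [stress, inner_add_left, real_inner_smul_left, real_inner_smul_left, mul_assoc]

lemma ae_differentiableAt_stress (hp : AbsolutelyContinuousOnInterval p a b)
    (hδ : AbsolutelyContinuousOnInterval δ a b) (hu : Differentiable ℝ (deriv u))
    (hw : Differentiable ℝ (deriv w)) :
    ∀ᵐ x, x ∈ uIcc a b → DifferentiableAt ℝ (stress p δ u w) x := by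
  filter_upwards [hp.ae_differentiableAt, hδ.ae_differentiableAt] with x hpx hδx hx
  exact ((hpx hx).smul (hu x)).add (((hδx hx).const_mul 2).smul (hw x))

lemma absolutelyContinuousOnInterval_inner_stress (hp : AbsolutelyContinuousOnInterval p a b)
    (hδ : AbsolutelyContinuousOnInterval δ a b) (hu : ContDiff ℝ 1 (deriv u))
    (hw : ContDiff ℝ 1 (deriv w)) (hv : ContDiff ℝ 1 v) :
    AbsolutelyContinuousOnInterval (fun x => ⟪stress p δ u w x, v x⟫) a b := by
  simp only [inner_stress]
  exact (hp.fun_mul (hu.inner ℝ hv).contDiffOn.absolutelyContinuousOnInterval).add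
    ((hδ.fun_mul (hw.inner ℝ hv).contDiffOn.absolutelyContinuousOnInterval).const_mul 2)

end Stress

section PhaseSpace

variable {L τ : ℝ} {m p : ℝ → ℝ} {f₁ f₂ f₃ f₄ u w θ q : ℝ → ℂ}

lemma normUsq_eq_add_weightedInner (L τ : ℝ) (m p : ℝ → ℝ) (u w θ q : ℝ → ℂ) :
    normUsq L τ m p u w θ q = weightedInner 0 L p (deriv u) (deriv u)
      + weightedInner 0 L m w w + weightedInner 0 L 1 θ θ + τ * weightedInner 0 L 1 q q := by
  simp only [normUsq, weightedInner_one_self, weightedInner_self _ _ p, weightedInner_self _ _ m]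

lemma normFsq_eq_normUsq (L τ : ℝ) (m p : ℝ → ℝ) (f₁ f₂ f₃ f₄ : ℝ → ℂ) :
    normFsq L τ m p f₁ f₂ f₃ f₄ = normUsq L τ m p f₁ f₂ f₃ f₄ :=
  rfl

lemma weightedInner_deriv_self_le_normUsq (hL : 0 ≤ L) (hτ : 0 ≤ τ)
    (hm₀ : ∀ x ∈ Icc 0 L, 0 ≤ m x) (u w θ q : ℝ → ℂ) :
    weightedInner 0 L p (deriv u) (deriv u) ≤ normUsq L τ m p u w θ q := by
  rw [normUsq_eq_add_weightedInner]
  have hw := weightedInner_self_nonneg hL hm₀ w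
  have hθ := weightedInner_self_nonneg (r := 1) hL (fun _ _ => zero_le_one) θ
  have hq := mul_nonneg hτ (weightedInner_self_nonneg (r := 1) hL (fun _ _ => zero_le_one) q)
  linarith

lemma weightedInner_self_le_normUsq (hL : 0 ≤ L) (hτ : 0 ≤ τ)
    (hp₀ : ∀ x ∈ Icc 0 L, 0 ≤ p x) (u w θ q : ℝ → ℂ) :
    weightedInner 0 L m w w ≤ normUsq L τ m p u w θ q := by
  rw [normUsq_eq_add_weightedInner]
  have hu := weightedInner_self_nonneg hL hp₀ (deriv u)
  have hθ := weightedInner_self_nonneg (r := 1) hL (fun _ _ => zero_le_one) θ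
  have hq := mul_nonneg hτ (weightedInner_self_nonneg (r := 1) hL (fun _ _ => zero_le_one) q)
  linarith

/-- The phase-space inner product `⟨F, U⟩` inducing `normFsq` and `normUsq`. -/
def phaseInner (L τ : ℝ) (m p : ℝ → ℝ) (f₁ f₂ f₃ f₄ u w θ q : ℝ → ℂ) : ℝ :=
  weightedInner 0 L p (deriv f₁) (deriv u) + weightedInner 0 L m f₂ w
    + weightedInner 0 L 1 f₃ θ + τ * weightedInner 0 L 1 f₄ q

theorem phaseInner_le_sqrt_mul_sqrt (hL : 0 ≤ L) (hτ : 0 ≤ τ)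
    (hm : ContinuousOn m (Icc 0 L)) (hm₀ : ∀ x ∈ Icc 0 L, 0 ≤ m x)
    (hp : ContinuousOn p (Icc 0 L)) (hp₀ : ∀ x ∈ Icc 0 L, 0 ≤ p x)
    (hf₁ : ContDiff ℝ 1 f₁) (hf₂ : Continuous f₂) (hf₃ : Continuous f₃) (hf₄ : Continuous f₄)
    (hu : ContDiff ℝ 1 u) (hw : Continuous w) (hθ : Continuous θ) (hq : Continuous q) :
    phaseInner L τ m p f₁ f₂ f₃ f₄ u w θ q
      ≤ √(normFsq L τ m p f₁ f₂ f₃ f₄) * √(normUsq L τ m p u w θ q) := by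
  have one_cont : ContinuousOn (1 : ℝ → ℝ) (Icc 0 L) := continuousOn_const
  have one_nonneg : ∀ x ∈ Icc 0 L, 0 ≤ (1 : ℝ → ℝ) x := fun _ _ => zero_le_one
  have le₁ := le_of_abs_le (abs_weightedInner_le_sqrt_mul_sqrt hL hp hp₀
    hf₁.continuous_deriv_one.continuousOn hu.continuous_deriv_one.continuousOn)
  have le₂ := le_of_abs_le (abs_weightedInner_le_sqrt_mul_sqrt hL hm hm₀
    hf₂.continuousOn hw.continuousOn)
  have le₃ := le_of_abs_le (abs_weightedInner_le_sqrt_mul_sqrt hL one_cont one_nonneg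
    hf₃.continuousOn hθ.continuousOn)
  have le₄ := mul_le_mul_of_nonneg_left (le_of_abs_le (abs_weightedInner_le_sqrt_mul_sqrt hL
    one_cont one_nonneg hf₄.continuousOn hq.continuousOn)) hτ
  have distribute_sqrt (A B : ℝ) : τ * (√A * √B) = √(τ * A) * √(τ * B) := by
    rw [Real.sqrt_mul hτ, Real.sqrt_mul hτ, mul_mul_mul_comm, Real.mul_self_sqrt hτ]
  rw [distribute_sqrt] at le₄
  let energies (u w θ q : ℝ → ℂ) : Fin 4 → ℝ := ![weightedInner 0 L p (deriv u) (deriv u),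
    weightedInner 0 L m w w, weightedInner 0 L 1 θ θ, τ * weightedInner 0 L 1 q q]
  have energies_nonneg (u w θ q : ℝ → ℂ) (i : Fin 4) : 0 ≤ energies u w θ q i := by
    fin_cases i
    exacts [weightedInner_self_nonneg hL hp₀ _, weightedInner_self_nonneg hL hm₀ _,
      weightedInner_self_nonneg hL one_nonneg _,
      mul_nonneg hτ (weightedInner_self_nonneg hL one_nonneg _)]
  have cauchy_schwarz := Real.sum_sqrt_mul_sqrt_le Finset.univ
    (energies_nonneg f₁ f₂ f₃ f₄) (energies_nonneg u w θ q)
  simp only [Fin.sum_univ_four, energies, Matrix.cons_val] at cauchy_schwarz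
  rw [normFsq_eq_normUsq, normUsq_eq_add_weightedInner, normUsq_eq_add_weightedInner]
  exact (add_le_add (add_le_add (add_le_add le₁ le₂) le₃) le₄).trans cauchy_schwarz

end PhaseSpace

namespace ResolventSol

variable {L η β κ τ lam : ℝ} {m δ p : ℝ → ℝ} {f₁ f₂ f₃ f₄ u w θ q : ℝ → ℂ}

lemma deriv_w_eq (h : ResolventSol L η β κ τ m δ p lam f₁ f₂ f₃ f₄ u w θ q) :
    EqOn (deriv w) (fun x => I * lam * deriv u x - deriv f₁ x) (Ioo 0 L) := by
  obtain ⟨hu, -, -, -, hf₁, -, -, -, heq, -⟩ := h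
  intro x hx
  have w_eq : w =ᶠ[nhds x] fun y => I * lam * u y - f₁ y := by
    filter_upwards [Ioo_mem_nhds hx.1 hx.2] with y hy
    linear_combination -(heq y hy).1
  have hux : HasDerivAt u (deriv u x) x := (hu.differentiable (by simp) x).hasDerivAt
  have hf₁x : HasDerivAt f₁ (deriv f₁ x) x := (hf₁.differentiable (by simp) x).hasDerivAt
  exact w_eq.deriv_eq.trans ((hux.const_mul (I * lam)).sub hf₁x).deriv

lemma f₁_zero (hL : 0 < L) (h : ResolventSol L η β κ τ m δ p lam f₁ f₂ f₃ f₄ u w θ q) :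
    f₁ 0 = 0 := by
  obtain ⟨hu, hw, -, -, hf₁, -, -, -, heq, hu₀, -, hw₀, -⟩ := h
  have hcont : Continuous fun x => I * lam * u x - w x :=
    (hu.continuous.const_mul _).sub hw.continuous
  have eqOn_closure := EqOn.closure (fun x hx => (heq x hx).1) hcont hf₁.continuous
  rw [closure_Ioo hL.ne] at eqOn_closure
  simpa [hu₀, hw₀] using (eqOn_closure (left_mem_Icc.2 hL.le)).symm

lemma deriv_stress_eq (h : ResolventSol L η β κ τ m δ p lam f₁ f₂ f₃ f₄ u w θ q) {x : ℝ}
    (hx : x ∈ Ioo 0 L) :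
    deriv (stress p δ u w) x = m x • (I * lam * w x - f₂ x) + η • deriv θ x := by
  obtain ⟨-, -, -, -, -, -, -, -, heq, -⟩ := h
  unfold stress
  simp only [real_smul, ofReal_mul, ofReal_ofNat]
  linear_combination -(heq x hx).2.1

lemma f₃_eq (h : ResolventSol L η β κ τ m δ p lam f₁ f₂ f₃ f₄ u w θ q) :
    EqOn f₃ (fun x => I * lam * θ x + (κ • deriv q x + η • deriv w x)) (Ioo 0 L) := by
  obtain ⟨-, hw, -, hq, -, -, -, -, heq, -⟩ := h
  intro x hx
  have hqx : HasDerivAt q (deriv q x) x := (hq.differentiable (by simp) x).hasDerivAt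
  have hwx : HasDerivAt w (deriv w x) x := (hw.differentiable (by simp) x).hasDerivAt
  have flux_deriv := ((hqx.const_mul (κ : ℂ)).add (hwx.const_mul (η : ℂ))).deriv
  exact (heq x hx).2.2.1.symm.trans (congrArg (I * lam * θ x + ·) flux_deriv)

lemma smul_f₄_eq (h : ResolventSol L η β κ τ m δ p lam f₁ f₂ f₃ f₄ u w θ q) :
    EqOn (fun x => τ • f₄ x)
      (fun x => I * ((lam * τ : ℝ) : ℂ) * q x + (κ • deriv θ x + β • q x)) (Ioo 0 L) := by
  obtain ⟨-, -, -, -, -, -, -, -, heq, -⟩ := h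
  intro x hx
  simp only [real_smul, ofReal_mul]
  linear_combination -(heq x hx).2.2.2

lemma ae_hasDerivAt_inner_stress_sub (h : ResolventSol L η β κ τ m δ p lam f₁ f₂ f₃ f₄ u w θ q)
    (hδ : AbsolutelyContinuousOnInterval δ 0 L) (hp : AbsolutelyContinuousOnInterval p 0 L)
    {v : ℝ → ℂ} (hv : Differentiable ℝ v) :
    ∀ᵐ x, x ∈ Ioo 0 L → HasDerivAt (fun x => ⟪stress p δ u w x, v x⟫ - η * ⟪θ x, v x⟫)
      (m x * ⟪I * lam * w x - f₂ x, v x⟫ + p x * ⟪deriv u x, deriv v x⟫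
        + 2 * (δ x * ⟪deriv w x, deriv v x⟫) - η * ⟪θ x, deriv v x⟫) x := by
  have deriv_stress := fun x => h.deriv_stress_eq (x := x)
  obtain ⟨hu, hw, hθ, -⟩ := h
  have hu' := (contDiff_infty_iff_deriv.1 hu).2.differentiable (by simp)
  have hw' := (contDiff_infty_iff_deriv.1 hw).2.differentiable (by simp)
  filter_upwards [ae_differentiableAt_stress hp hδ hu' hw'] with x hσ hx
  have hθx : HasDerivAt θ (deriv θ x) x := (hθ.differentiable (by simp) x).hasDerivAt
  have hσx := (hσ (Icc_subset_uIcc (Ioo_subset_Icc_self hx))).hasDerivAt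
  refine ((hσx.inner ℝ (hv x).hasDerivAt).sub
    ((hθx.inner ℝ (hv x).hasDerivAt).const_mul η)).congr_deriv ?_
  rw [deriv_stress x hx, inner_stress, inner_add_left, real_inner_smul_left,
    real_inner_smul_left]
  ring

theorem weak_momentum (h : ResolventSol L η β κ τ m δ p lam f₁ f₂ f₃ f₄ u w θ q)
    (hL : 0 ≤ L) (hm : ContinuousOn m (Icc 0 L)) (hδ : AbsolutelyContinuousOnInterval δ 0 L)
    (hp : AbsolutelyContinuousOnInterval p 0 L) {v : ℝ → ℂ} (hv : ContDiff ℝ 1 v)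
    (hv₀ : v 0 = 0) (hvL : v L = 0) :
    weightedInner 0 L m (fun x => I * lam * w x - f₂ x) v
      + weightedInner 0 L p (deriv u) (deriv v) + 2 * weightedInner 0 L δ (deriv w) (deriv v)
      = η * weightedInner 0 L 1 θ (deriv v) := by
  have flux_deriv := h.ae_hasDerivAt_inner_stress_sub hδ hp (hv.differentiable (by simp))
  obtain ⟨hu, hw, hθ, -, -, hf₂, -⟩ := h
  have hu' : ContDiff ℝ 1 (deriv u) := (contDiff_infty_iff_deriv.1 hu).2.of_le (by simp)
  have hw' : ContDiff ℝ 1 (deriv w) := (contDiff_infty_iff_deriv.1 hw).2.of_le (by simp)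
  have hθ₁ : ContDiff ℝ 1 θ := hθ.of_le (by simp)
  have flux_ac : AbsolutelyContinuousOnInterval
      (fun x => ⟪stress p δ u w x, v x⟫ - η * ⟪θ x, v x⟫) 0 L :=
    (absolutelyContinuousOnInterval_inner_stress hp hδ hu' hw' hv).sub
      ((hθ₁.inner ℝ hv).contDiffOn.absolutelyContinuousOnInterval.const_mul η)
  have balance := integral_eq_sub_of_ae_hasDerivAt hL flux_ac flux_deriv
  have cw := hw.continuous
  have cf₂ := hf₂.continuous
  have cv := hv.continuous_deriv_one.continuousOn (s := Icc 0 L)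
  have int_m := intervalIntegrable_mul_inner hL hm
    (f := fun x => I * lam * w x - f₂ x) (by fun_prop) hv.continuous.continuousOn
  have int_p := intervalIntegrable_mul_inner hL (uIcc_of_le hL ▸ hp.continuousOn)
    hu'.continuous.continuousOn cv
  have int_δ := intervalIntegrable_mul_inner hL (uIcc_of_le hL ▸ hδ.continuousOn)
    hw'.continuous.continuousOn cv
  have int_θ := intervalIntegrable_mul_inner hL continuousOn_const (r := 1)
    hθ.continuous.continuousOn cv
  simp only [weightedInner, Pi.one_apply, one_mul] at int_θ ⊢
  rw [intervalIntegral.integral_sub ((int_m.add int_p).add (int_δ.const_mul 2))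
    (int_θ.const_mul η), intervalIntegral.integral_add (int_m.add int_p) (int_δ.const_mul 2),
    intervalIntegral.integral_add int_m int_p, intervalIntegral.integral_const_mul,
    intervalIntegral.integral_const_mul] at balance
  simp only [hv₀, hvL, inner_zero_right, mul_zero, sub_zero] at balance
  linarith

theorem heat_coupling_identity (h : ResolventSol L η β κ τ m δ p lam f₁ f₂ f₃ f₄ u w θ q)
    (hL : 0 ≤ L) :
    η * weightedInner 0 L 1 θ (deriv w) + β * weightedInner 0 L 1 q q
      = weightedInner 0 L 1 f₃ θ + τ * weightedInner 0 L 1 f₄ q := by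
  have f₃_eq := h.f₃_eq
  have smul_f₄_eq := h.smul_f₄_eq
  obtain ⟨-, hw, hθ, hq, -, -, -, -, -, -, -, -, -, hq₀, hqL⟩ := h
  have hθ₁ : ContDiff ℝ 1 θ := hθ.of_le (by simp)
  have hq₁ : ContDiff ℝ 1 q := hq.of_le (by simp)
  have cθ := hθ.continuous
  have cq := hq.continuous
  have cw' : Continuous (deriv w) := hw.continuous_deriv (by simp)
  have one_cont : ContinuousOn (1 : ℝ → ℝ) (Icc 0 L) := continuousOn_const
  have heat : weightedInner 0 L 1 f₃ θ
      = κ * weightedInner 0 L 1 (deriv q) θ + η * weightedInner 0 L 1 (deriv w) θ := by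
    rw [weightedInner_congr_left hL f₃_eq, weightedInner_add_left hL one_cont,
      weightedInner_I_mul_self, zero_add, weightedInner_add_left hL one_cont,
      weightedInner_smul_left, weightedInner_smul_left] <;> fun_prop
  have cattaneo : τ * weightedInner 0 L 1 f₄ q
      = κ * weightedInner 0 L 1 (deriv θ) q + β * weightedInner 0 L 1 q q := by
    rw [← weightedInner_smul_left, weightedInner_congr_left hL smul_f₄_eq,
      weightedInner_add_left hL one_cont, weightedInner_I_mul_self, zero_add,
      weightedInner_add_left hL one_cont, weightedInner_smul_left,
      weightedInner_smul_left] <;> fun_prop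
  rw [heat, cattaneo, weightedInner_one_deriv_left hq₁ hθ₁ hq₀ hqL,
    weightedInner_comm _ _ _ θ (deriv w), weightedInner_comm _ _ _ q (deriv θ)]
  ring

theorem dissipation_identity (h : ResolventSol L η β κ τ m δ p lam f₁ f₂ f₃ f₄ u w θ q)
    (hL : 0 ≤ L) (hm : ContinuousOn m (Icc 0 L)) (hδ : AbsolutelyContinuousOnInterval δ 0 L)
    (hp : AbsolutelyContinuousOnInterval p 0 L) :
    2 * weightedInner 0 L δ (deriv w) (deriv w) + β * weightedInner 0 L 1 q q
      = phaseInner L τ m p f₁ f₂ f₃ f₄ u w θ q := by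
  have heat_coupling := h.heat_coupling_identity hL
  have deriv_w_eq := h.deriv_w_eq
  have weak := h.weak_momentum hL hm hδ hp (v := w)
  obtain ⟨hu, hw, -, -, hf₁, hf₂, -, -, -, -, -, hw₀, hwL, -⟩ := h
  specialize weak (hw.of_le (by simp)) hw₀ hwL
  have cw := hw.continuous
  have cf₂ := hf₂.continuous
  have cu' : Continuous (deriv u) := hu.continuous_deriv (by simp)
  have cf₁' : Continuous (deriv f₁) := hf₁.continuous_deriv (by simp)
  have hpc : ContinuousOn p (Icc 0 L) := uIcc_of_le hL ▸ hp.continuousOn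
  have inertia : weightedInner 0 L m (fun x => I * lam * w x - f₂ x) w
      = -weightedInner 0 L m f₂ w := by
    rw [weightedInner_sub_left hL hm, weightedInner_I_mul_self, zero_sub] <;> fun_prop
  have elastic : weightedInner 0 L p (deriv w) (deriv u)
      = -weightedInner 0 L p (deriv f₁) (deriv u) := by
    rw [weightedInner_congr_left hL deriv_w_eq, weightedInner_sub_left hL hpc,
      weightedInner_I_mul_self, zero_sub] <;> fun_prop
  rw [weightedInner_comm] at elastic
  rw [phaseInner]
  linarith

theorem multiplier_identity (h : ResolventSol L η β κ τ m δ p lam f₁ f₂ f₃ f₄ u w θ q)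
    (hL : 0 ≤ L) (hm : ContinuousOn m (Icc 0 L)) (hδ : AbsolutelyContinuousOnInterval δ 0 L)
    (hp : AbsolutelyContinuousOnInterval p 0 L) :
    weightedInner 0 L p (deriv u) (deriv u)
      = weightedInner 0 L m w w + weightedInner 0 L m f₁ w + weightedInner 0 L m f₂ u
        - 2 * weightedInner 0 L δ (deriv w) (deriv u)
        + η * weightedInner 0 L 1 θ (deriv u) := by
  have weak := h.weak_momentum hL hm hδ hp (v := u)
  obtain ⟨hu, hw, -, -, hf₁, hf₂, -, -, heq, hu₀, huL, -⟩ := h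
  specialize weak (hu.of_le (by simp)) hu₀ huL
  have cu := hu.continuous
  have cw := hw.continuous
  have cf₁ := hf₁.continuous
  have cf₂ := hf₂.continuous
  have velocity : EqOn (fun x => I * lam * u x) (fun x => w x + f₁ x) (Ioo 0 L) :=
    fun x hx => sub_eq_iff_eq_add'.1 (heq x hx).1
  have inertia : weightedInner 0 L m (fun x => I * lam * w x - f₂ x) u
      = -(weightedInner 0 L m w w + weightedInner 0 L m f₁ w) - weightedInner 0 L m f₂ u := by
    rw [weightedInner_sub_left hL hm, weightedInner_I_mul_left, weightedInner_comm _ _ _ w,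
      weightedInner_congr_left hL velocity, weightedInner_add_left hL hm] <;> fun_prop
  linarith

theorem dissipation_le (h : ResolventSol L η β κ τ m δ p lam f₁ f₂ f₃ f₄ u w θ q)
    (hL : 0 ≤ L) (hβ : 0 ≤ β) (hτ : 0 ≤ τ) (hm : ContinuousOn m (Icc 0 L))
    (hm₀ : ∀ x ∈ Icc 0 L, 0 ≤ m x) (hδ : AbsolutelyContinuousOnInterval δ 0 L)
    (hp : AbsolutelyContinuousOnInterval p 0 L) (hp₀ : ∀ x ∈ Icc 0 L, 0 ≤ p x) :
    2 * weightedInner 0 L δ (deriv w) (deriv w)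
      ≤ √(normFsq L τ m p f₁ f₂ f₃ f₄) * √(normUsq L τ m p u w θ q) := by
  have identity := h.dissipation_identity hL hm hδ hp
  obtain ⟨hu, hw, hθ, hq, hf₁, hf₂, hf₃, hf₄, -⟩ := h
  have cauchy_schwarz := phaseInner_le_sqrt_mul_sqrt hL hτ hm hm₀
    (uIcc_of_le hL ▸ hp.continuousOn) hp₀ (hf₁.of_le (by simp)) hf₂.continuous hf₃.continuous
    hf₄.continuous (hu.of_le (by simp)) hw.continuous hθ.continuous hq.continuous
  have flux_nonneg := mul_nonneg hβ
    (weightedInner_self_nonneg (r := 1) hL (fun _ _ => zero_le_one) q)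
  linarith

theorem load_terms_le (h : ResolventSol L η β κ τ m δ p lam f₁ f₂ f₃ f₄ u w θ q)
    (hL : 0 < L) (hτ : 0 ≤ τ) (hm : ContinuousOn m (Icc 0 L)) (hm₀ : ∀ x ∈ Icc 0 L, 0 ≤ m x)
    (hp₀ : ∀ x ∈ Icc 0 L, 0 ≤ p x) {C : ℝ} (hC : 0 ≤ C)
    (poincare : ∀ v : ℝ → ℂ, ContDiff ℝ 1 v → v 0 = 0 →
      weightedInner 0 L m v v ≤ C * weightedInner 0 L p (deriv v) (deriv v)) :
    weightedInner 0 L m f₁ w + weightedInner 0 L m f₂ u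
      ≤ 2 * √C * (√(normFsq L τ m p f₁ f₂ f₃ f₄) * √(normUsq L τ m p u w θ q)) := by
  have hf₁₀ := h.f₁_zero hL
  obtain ⟨hu, hw, -, -, hf₁, hf₂, -, -, -, hu₀, -⟩ := h
  rw [normFsq_eq_normUsq]
  have f₁_le := weightedInner_le_sqrt_mul_sqrt_mul_sqrt hL.le hm hm₀
    hf₁.continuous.continuousOn hw.continuous.continuousOn hC
    ((poincare f₁ (hf₁.of_le (by simp)) hf₁₀).trans (mul_le_mul_of_nonneg_left
      (weightedInner_deriv_self_le_normUsq hL.le hτ hm₀ f₁ f₂ f₃ f₄) hC))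
    (weightedInner_self_le_normUsq hL.le hτ hp₀ u w θ q)
  have f₂_le := weightedInner_le_sqrt_mul_sqrt_mul_sqrt hL.le hm hm₀
    hu.continuous.continuousOn hf₂.continuous.continuousOn hC
    ((poincare u (hu.of_le (by simp)) hu₀).trans (mul_le_mul_of_nonneg_left
      (weightedInner_deriv_self_le_normUsq hL.le hτ hm₀ u w θ q) hC))
    (weightedInner_self_le_normUsq hL.le hτ hp₀ f₁ f₂ f₃ f₄)
  rw [weightedInner_comm 0 L m f₂ u]
  linarith

theorem strain_energy_le (h : ResolventSol L η β κ τ m δ p lam f₁ f₂ f₃ f₄ u w θ q)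
    (hL : 0 < L) (hβ : 0 ≤ β) (hτ : 0 ≤ τ) (hm : ContinuousOn m (Icc 0 L))
    (hm₀ : ∀ x ∈ Icc 0 L, 0 ≤ m x) (hδ : AbsolutelyContinuousOnInterval δ 0 L)
    (hδ₀ : ∀ x ∈ Icc 0 L, 0 ≤ δ x) (hp : AbsolutelyContinuousOnInterval p 0 L)
    (hp₀ : ∀ x ∈ Icc 0 L, 0 ≤ p x) {Cδ Cp c k : ℝ} (hCδ : 0 ≤ Cδ) (hCp : 0 ≤ Cp) (hc : 0 < c)
    (hk : 0 < k) (hδp : ∀ x ∈ Icc 0 L, δ x ≤ c * p x) (hkp : ∀ x ∈ Icc 0 L, 1 ≤ k * p x)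
    (poincare_δ : ∀ v : ℝ → ℂ, ContDiff ℝ 1 v → v 0 = 0 →
      weightedInner 0 L m v v ≤ Cδ * weightedInner 0 L δ (deriv v) (deriv v))
    (poincare_p : ∀ v : ℝ → ℂ, ContDiff ℝ 1 v → v 0 = 0 →
      weightedInner 0 L m v v ≤ Cp * weightedInner 0 L p (deriv v) (deriv v)) :
    weightedInner 0 L p (deriv u) (deriv u)
      ≤ (Cδ + 4 * c + 4 * √Cp) * (√(normFsq L τ m p f₁ f₂ f₃ f₄) * √(normUsq L τ m p u w θ q))
        + 2 * η ^ 2 * k * weightedInner 0 L 1 θ θ := by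
  have identity := h.multiplier_identity hL.le hm hδ hp
  have dissipation := mul_le_mul_of_nonneg_left
    (h.dissipation_le hL.le hβ hτ hm hm₀ hδ hp hp₀) (by positivity : 0 ≤ Cδ + 4 * c)
  have loads := h.load_terms_le hL hτ hm hm₀ hp₀ hCp poincare_p
  obtain ⟨hu, hw, hθ, -, -, -, -, -, -, -, -, hw₀, -⟩ := h
  have hpc : ContinuousOn p (Icc 0 L) := uIcc_of_le hL.le ▸ hp.continuousOn
  have hδc : ContinuousOn δ (Icc 0 L) := uIcc_of_le hL.le ▸ hδ.continuousOn
  have cu' := (hu.continuous_deriv (by simp)).continuousOn (s := Icc 0 L)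
  have kinetic := poincare_δ w (hw.of_le (by simp)) hw₀
  have viscous := mul_weightedInner_le_add_quarter hL.le hδc hδ₀ hpc hc hδp
    (hw.continuous_deriv (by simp)).continuousOn cu' (-2)
  have thermal := mul_weightedInner_le_add_quarter (r := 1) hL.le continuousOn_const
    (fun _ _ => zero_le_one) hpc hk hkp hθ.continuous.continuousOn cu' η
  linarith

end ResolventSol

theorem resolvent_estimate_u_general {L : ℝ} (hL : 0 < L) (η : ℝ) {m δ p : ℝ → ℝ}
    (hm : ContinuousOn m (Icc 0 L)) (hm₀ : ∀ x ∈ Icc 0 L, 0 ≤ m x)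
    (hδ : AbsolutelyContinuousOnInterval δ 0 L) (hδ₀ : ∀ x ∈ Icc 0 L, 0 < δ x)
    (hp : AbsolutelyContinuousOnInterval p 0 L) (hp₀ : ∀ x ∈ Icc 0 L, 0 < p x) :
    ∃ C > (0 : ℝ), ∀ (β κ τ : ℝ), 0 ≤ β → 0 ≤ τ →
      ∀ (lam : ℝ) (f₁ f₂ f₃ f₄ u w θ q : ℝ → ℂ),
        ResolventSol L η β κ τ m δ p lam f₁ f₂ f₃ f₄ u w θ q →
          (∫ x in (0 : ℝ)..L, p x * ‖deriv u x‖ ^ 2)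
            ≤ C * (√(normFsq L τ m p f₁ f₂ f₃ f₄) * √(normUsq L τ m p u w θ q)
              + ∫ x in (0 : ℝ)..L, ‖θ x‖ ^ 2) := by
  have hδc : ContinuousOn δ (Icc 0 L) := uIcc_of_le hL.le ▸ hδ.continuousOn
  have hpc : ContinuousOn p (Icc 0 L) := uIcc_of_le hL.le ▸ hp.continuousOn
  obtain ⟨Cδ, hCδ, poincare_δ⟩ :=
    exists_weightedInner_self_le_mul_deriv (E := ℂ) hL.le hm hδc hδ₀
  obtain ⟨Cp, hCp, poincare_p⟩ :=
    exists_weightedInner_self_le_mul_deriv (E := ℂ) hL.le hm hpc hp₀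
  obtain ⟨c, hc, hδp⟩ := exists_pos_forall_le_mul_of_isCompact isCompact_Icc hδc hpc hp₀
  obtain ⟨k, hk, hkp⟩ :=
    exists_pos_forall_le_mul_of_isCompact (r := 1) isCompact_Icc continuousOn_const hpc hp₀
  refine ⟨Cδ + 4 * c + 4 * √Cp + 2 * η ^ 2 * k, by positivity,
    fun β κ τ hβ hτ lam f₁ f₂ f₃ f₄ u w θ q h => ?_⟩
  rw [← weightedInner_self, ← weightedInner_one_self, mul_add]
  refine (h.strain_energy_le hL hβ hτ hm hm₀ hδ (fun x hx => (hδ₀ x hx).le) hp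
    (fun x hx => (hp₀ x hx).le) hCδ hCp hc hk hδp hkp poincare_δ poincare_p).trans ?_
  have hθ : 0 ≤ weightedInner 0 L 1 θ θ :=
    weightedInner_self_nonneg hL.le (fun _ _ => zero_le_one) θ
  exact add_le_add
    (mul_le_mul_of_nonneg_right (le_add_of_nonneg_right (by positivity)) (by positivity))
    (mul_le_mul_of_nonneg_right (le_add_of_nonneg_left (by positivity)) hθ)

theorem resolvent_estimate_u
    (L η β κ τ : ℝ) (hL : 0 < L) (hη : 0 < η) (hβ : 0 < β) (hκ : 0 < κ) (hτ : 0 < τ)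
    (m δ p : ℝ → ℝ)
    (hmLip : ∃ K, LipschitzOnWith K m (Icc 0 L))
    (hδLip : ∃ K, LipschitzOnWith K δ (Icc 0 L))
    (hpLip : ∃ K, LipschitzOnWith K p (Icc 0 L))
    (hmpos : ∀ x ∈ Icc (0 : ℝ) L, 0 < m x)
    (hδpos : ∀ x ∈ Icc (0 : ℝ) L, 0 < δ x)
    (hppos : ∀ x ∈ Icc (0 : ℝ) L, 0 < p x)
    :
    ∃ C > (0 : ℝ),
      ∀ (lam : ℝ) (f₁ f₂ f₃ f₄ u w θ q : ℝ → ℂ),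
        ResolventSol L η β κ τ m δ p lam f₁ f₂ f₃ f₄ u w θ q →
          (∫ x in (0 : ℝ)..L, p x * ‖deriv u x‖ ^ 2)
            ≤ C * (Real.sqrt (normFsq L τ m p f₁ f₂ f₃ f₄)
                * Real.sqrt (normUsq L τ m p u w θ q)
              + ∫ x in (0 : ℝ)..L, ‖θ x‖ ^ 2) := by
  have ac_of_lipschitz {r : ℝ → ℝ} (hr : ∃ K, LipschitzOnWith K r (Icc 0 L)) :
      AbsolutelyContinuousOnInterval r 0 L :=
    hr.elim fun _ h => (uIcc_of_le hL.le ▸ h).absolutelyContinuousOnInterval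
  obtain ⟨C, hC, estimate⟩ := resolvent_estimate_u_general hL η
    (hmLip.elim fun _ h => h.continuousOn) (fun x hx => (hmpos x hx).le)
    (ac_of_lipschitz hδLip) hδpos (ac_of_lipschitz hpLip) hppos
  exact ⟨C, hC, estimate β κ τ hβ.le hτ.le⟩
end
end
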